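/- Let n, d ∈ ℕ, q ∈ ℕ∪{0}, K, d⋆, d* ∈ ℕ, β, r, α ∈ (0,∞), τ ∈ (0,∞], ν ∈ [0,∞), b ∈ (0,∞), and G ∈ (0,∞), N ∈ [1,∞), S ∈ (0,∞], B ∈ (0,∞). Assume d* ≤ d, d*·q ≤ K·q, and not both α < 1 and τ ≥ 1. Let f̂_n^NN be an empirical φ_h-risk minimizer over F^NN_d(G,N,S,B,∞) based on an i.i.d. sample of size n from P. Then there exist constants c4 ∈ (0,∞) depending only on (d⋆,d*,β,r,q,τ) and c5 ∈ (0,∞) depending only on (d,α,τ,ν,b) such that whenever 2 ≤ n, c4 ≤ G ≤ b, K·c4 ≤ N ≤ b, 1 ≤ B ≤ b·n^ν, and K·c4 ≤ S, one has sup{E_{P^⊗n}[E_P(f̂_n^NN)] : P ∈ H^{d,β,r}_{q,K,d*,d⋆} ∩ T^{d,∞}_{α,τ}} ≤ c5·(log n)/n. -/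

import Mathlib

open MeasureTheory ENNReal Set

noncomputable section

namespace ZZS

/-! ## Basic geometry -/

/-- The closed unit cube `[0,1]^m`. -/
def cube (m : ℕ) : Set (Fin m → ℝ) := Set.univ.pi fun _ => Set.Icc (0 : ℝ) 1

/-- The open unit cube `(0,1)^m`. -/
def cubeo (m : ℕ) : Set (Fin m → ℝ) := Set.univ.pi fun _ => Set.Ioo (0 : ℝ) 1

/-- The label set `{-1, 1} ⊆ ℝ`. -/
def labels : Set ℝ := {-1, 1}

/-- Euclidean distance on `Fin m → ℝ`. -/
def e2 {m : ℕ} (x z : Fin m → ℝ) : ℝ := Real.sqrt (∑ i, (x i - z i) ^ 2)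

/-! ## Multi-index partial derivatives and Hölder balls -/

/-- Iterated partial derivative along a list of coordinate directions. -/
def pderivList {m : ℕ} : List (Fin m) → ((Fin m → ℝ) → ℝ) → (Fin m → ℝ) → ℝ
  | [], f => f
  | i :: l, f => pderivList l fun x => fderiv ℝ f x (Pi.single i 1)

/-- The canonical list of directions attached to a multi-index. -/
def idxList {m : ℕ} (u : Fin m → ℕ) : List (Fin m) :=
  (List.finRange m).flatMap fun i => List.replicate (u i) i

/-- The partial derivative `D^u f` for a multi-index `u`. -/
def Dm {m : ℕ} (u : Fin m → ℕ) (f : (Fin m → ℝ) → ℝ) : (Fin m → ℝ) → ℝ :=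
  pderivList (idxList u) f

/-- The order `‖u‖₁` of a multi-index `u`. -/
def mord {m : ℕ} (u : Fin m → ℕ) : ℕ := ∑ i, u i

/-- The Hölder-`β` norm of `f`, suprema taken over the set `S` (value in `ℝ≥0∞`). -/
def holderNormOn (m : ℕ) (β : ℝ) (S : Set (Fin m → ℝ)) (f : (Fin m → ℝ) → ℝ) : ℝ≥0∞ :=
  (⨆ (u : Fin m → ℕ) (_ : (mord u : ℝ) < β) (x ∈ S), ENNReal.ofReal |Dm u f x|) +
    ⨆ (u : Fin m → ℕ) (_ : (⌈β⌉ : ℝ) - 1 ≤ (mord u : ℝ) ∧ (mord u : ℝ) < β)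
      (x ∈ S) (z ∈ S) (_ : x ≠ z),
      ENNReal.ofReal |Dm u f x - Dm u f z| /
        ENNReal.ofReal (e2 x z) ^ (β + 1 - (⌈β⌉ : ℝ))

/-- `⌈β - 1⌉`, the number of derivatives required for Hölder-`β` smoothness. -/
def smoothOrder (β : ℝ) : ℕ := ⌈β - 1⌉₊

/-- The Hölder ball `B^β_r([0,1]^m)`:  `⌈β-1⌉`-times continuously differentiable functions on
the interior of the cube (with uniformly continuous derivatives, so that they extend
continuously), with Hölder-`β` norm at most `r`. -/
def HolderBall (m : ℕ) (β r : ℝ) : Set ((Fin m → ℝ) → ℝ) :=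
  {f | ContinuousOn f (cube m) ∧
    ContDiffOn ℝ (smoothOrder β : ℕ∞) f (cubeo m) ∧
    (∀ u : Fin m → ℕ, (mord u : ℝ) < β → UniformContinuousOn (Dm u f) (cubeo m)) ∧
    holderNormOn m β (cubeo m) f ≤ ENNReal.ofReal r}

/-! ## Compositional function classes -/

/-- `G^H_m(dstar, β, r)`: Hölder-`β` functions of `dstar` of the `m` coordinates. -/
def GH (m dstar : ℕ) (β r : ℝ) : Set ((Fin m → ℝ) → ℝ) :=
  {f | ∃ (e : Fin dstar → Fin m) (g : (Fin dstar → ℝ) → ℝ),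
    StrictMono e ∧ g ∈ HolderBall dstar β r ∧ ∀ x ∈ cube m, f x = g fun j => x (e j)}

/-- `G^M_m(dmax)`: maxima of at most `dmax` coordinates. -/
def GM (m dmax : ℕ) : Set ((Fin m → ℝ) → ℝ) :=
  {f | ∃ (I : Finset (Fin m)) (hI : I.Nonempty), I.card ≤ dmax ∧
    ∀ x ∈ cube m, f x = I.sup' hI fun i => x i}

/-- The compositional class `G^CHOM_d(q, K, dmax, dstar, β, r)`. -/
def GCHOM (K dmax dstar : ℕ) (β r : ℝ) : ℕ → (d : ℕ) → Set ((Fin d → ℝ) → ℝ)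
  | 0, d => {f | ∃ h ∈ GH d dstar β r ∪ GM d dmax, ∀ x ∈ cube d, f x = h x}
  | q + 1, d =>
    {f | ∃ (H : (Fin d → ℝ) → Fin K → ℝ) (g : (Fin K → ℝ) → ℝ),
      (∀ j, (fun x => H x j) ∈ GH d dstar β r ∪ GM d dmax) ∧
      (∀ x ∈ cube d, H x ∈ cube K) ∧
      g ∈ GCHOM K dmax dstar β r q K ∧ ∀ x ∈ cube d, f x = g (H x)}

/-- The compositional class `G^CH_d(q, K, dstar, β, r)` (no max-value components). -/
def GCH (K dstar : ℕ) (β r : ℝ) : ℕ → (d : ℕ) → Set ((Fin d → ℝ) → ℝ)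
  | 0, d => {f | ∃ h ∈ GH d dstar β r, ∀ x ∈ cube d, f x = h x}
  | q + 1, d =>
    {f | ∃ (H : (Fin d → ℝ) → Fin K → ℝ) (g : (Fin K → ℝ) → ℝ),
      (∀ j, (fun x => H x j) ∈ GH d dstar β r) ∧
      (∀ x ∈ cube d, H x ∈ cube K) ∧
      g ∈ GCH K dstar β r q K ∧ ∀ x ∈ cube d, f x = g (H x)}

/-! ## Losses, risks, and data distributions -/

/-- The sign function (`sgn 0 = 1`). -/
def sgn (t : ℝ) : ℝ := if 0 ≤ t then 1 else -1

/-- The hinge loss. -/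
def hinge (t : ℝ) : ℝ := max 0 (1 - t)

/-- The truncation operator `T_F`. -/
def trunc (F t : ℝ) : ℝ := min F (max (-F) t)

/-- The joint distribution `P_{η,Q}` on `[0,1]^d × {-1,1}` with input marginal `Q` and
conditional class probability function `η`. -/
def jointMeasure {d : ℕ} (η : (Fin d → ℝ) → ℝ) (Q : Measure (Fin d → ℝ)) :
    Measure ((Fin d → ℝ) × ℝ) :=
  Q.bind fun x =>
    ENNReal.ofReal (η x) • Measure.dirac (x, (1 : ℝ)) +
      ENNReal.ofReal (1 - η x) • Measure.dirac (x, (-1 : ℝ))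

/-- The 0-1 risk (misclassification error). -/
def risk01 {d : ℕ} (P : Measure ((Fin d → ℝ) × ℝ)) (f : (Fin d → ℝ) → ℝ) : ℝ :=
  (P {p | sgn (f p.1) ≠ p.2}).toReal

/-- The infimum of the 0-1 risk over all measurable functions. -/
def bayes01 {d : ℕ} (P : Measure ((Fin d → ℝ) × ℝ)) : ℝ :=
  ⨅ g : {g : (Fin d → ℝ) → ℝ // Measurable g}, risk01 P g.1

/-- The excess 0-1 risk. -/
def excess01 {d : ℕ} (P : Measure ((Fin d → ℝ) × ℝ)) (f : (Fin d → ℝ) → ℝ) : ℝ :=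
  risk01 P f - bayes01 P

/-- The `φ`-risk. -/
def riskPhi {d : ℕ} (φ : ℝ → ℝ) (P : Measure ((Fin d → ℝ) × ℝ)) (f : (Fin d → ℝ) → ℝ) : ℝ :=
  ∫ p, φ (p.2 * f p.1) ∂P

/-- The infimum of the `φ`-risk over all measurable functions. -/
def bayesPhi {d : ℕ} (φ : ℝ → ℝ) (P : Measure ((Fin d → ℝ) × ℝ)) : ℝ :=
  ⨅ g : {g : (Fin d → ℝ) → ℝ // Measurable g}, riskPhi φ P g.1

/-- The excess `φ`-risk. -/
def excessPhi {d : ℕ} (φ : ℝ → ℝ) (P : Measure ((Fin d → ℝ) × ℝ)) (f : (Fin d → ℝ) → ℝ) : ℝ :=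
  riskPhi φ P f - bayesPhi φ P

/-- A Borel probability measure on `[0,1]^d × {-1,1}`, presented by its input marginal `Q`
(a Borel probability measure concentrated on the cube) and its conditional class
probability function `η` (measurable, `[0,1]`-valued);  the measure itself is
`jointMeasure η Q`. -/
structure DataDist (d : ℕ) where
  η : (Fin d → ℝ) → ℝ
  Q : Measure (Fin d → ℝ)
  η_meas : Measurable η
  η_mem : ∀ x, η x ∈ Set.Icc (0 : ℝ) 1
  Q_prob : IsProbabilityMeasure Q
  Q_cube : Q (cube d) = 1

/-- The measure on `[0,1]^d × {-1,1}` associated with a `DataDist`. -/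
def DataDist.P {d : ℕ} (D : DataDist d) : Measure ((Fin d → ℝ) × ℝ) := jointMeasure D.η D.Q

/-- `x ^ s` for `s ∈ [0,∞]`, with the conventions `x ^ ∞ = 0` for `x < 1` and `1 ^ ∞ = 1`. -/
def rpowE (x : ℝ≥0∞) (s : ℝ≥0∞) : ℝ≥0∞ :=
  if s = ∞ then (if x < 1 then 0 else if x = 1 then 1 else ∞) else x ^ s.toReal

/-- The Tsybakov noise class `T^{d,s}_{α,τ}` (noise exponent `s ∈ [0,∞]`,
threshold `τ ∈ (0,∞]`). -/
def Tsybakov (d : ℕ) (s : ℝ≥0∞) (α : ℝ) (τ : ℝ≥0∞) : Set (DataDist d) :=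
  {P | ∀ t : ℝ, 0 < t → ENNReal.ofReal t ≤ τ →
    P.Q ({x | |2 * P.η x - 1| ≤ t} ∩ cube d) ≤ ENNReal.ofReal α * rpowE (ENNReal.ofReal t) s}

/-- The class `H^{d,β,r}_{q,K,dstar,dmax}`: distributions whose conditional class probability
agrees a.s. with a member of `G^CHOM`. -/
def HCHOM (d q K dstar dmax : ℕ) (β r : ℝ) : Set (DataDist d) :=
  {P | ∃ f ∈ GCHOM K dmax dstar β r q d, ∀ᵐ x ∂P.Q, P.η x = f x}

/-- `M_{Λ,d}`: Borel probability measures on `[0,1]^d` with a `[0,Λ]`-valued density with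
respect to Lebesgue measure. -/
def MLam (d : ℕ) (Λ : ℝ) : Set (Measure (Fin d → ℝ)) :=
  {Q | ∃ g : (Fin d → ℝ) → ℝ, Measurable g ∧ (∀ x, g x ∈ Set.Icc 0 Λ) ∧
    Q = (volume.restrict (cube d)).withDensity fun x => ENNReal.ofReal (g x)}

/-- The class `H^{d,β,r,Λ}_{q,K,dstar}`: joint laws `P_{η,Q}` with `η ∈ G^CH` (valued in
`[0,1]`) and `Q ∈ M_{Λ,d}`. -/
def HCHL (d q K dstar : ℕ) (β r Λ : ℝ) : Set (DataDist d) :=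
  {P | (∃ f ∈ GCH K dstar β r q d, (∀ x ∈ cube d, f x ∈ Set.Icc (0 : ℝ) 1) ∧
      ∀ᵐ x ∂P.Q, P.η x = f x) ∧ P.Q ∈ MLam d Λ}

/-- The class `H^{d,β,r}_{q,K,dstar}`: joint laws `P_{η,Q}` with `η ∈ G^CH` (valued in
`[0,1]`) and `Q` an arbitrary Borel probability measure on the cube. -/
def HCH (d q K dstar : ℕ) (β r : ℝ) : Set (DataDist d) :=
  {P | ∃ f ∈ GCH K dstar β r q d, (∀ x ∈ cube d, f x ∈ Set.Icc (0 : ℝ) 1) ∧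
    ∀ᵐ x ∂P.Q, P.η x = f x}

/-! ## Samples and estimators -/

/-- The law of an i.i.d. sample of size `n` from `μ`. -/
def iid {α : Type*} [MeasurableSpace α] (μ : Measure α) : (n : ℕ) → Measure (Fin n → α)
  | 0 => Measure.dirac fun i => i.elim0
  | n + 1 => (iid μ n).bind fun p => μ.map fun a => Fin.snoc p a

/-- An estimator: a rule assigning to each sample of size `n` a function `[0,1]^d → ℝ`. -/
def Estimator (d n : ℕ) := (Fin n → (Fin d → ℝ) × ℝ) → (Fin d → ℝ) → ℝ

/-- (Joint) measurability of an estimator. -/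
def Estimator.Meas {d n : ℕ} (A : Estimator d n) : Prop :=
  Measurable fun p : (Fin n → (Fin d → ℝ) × ℝ) × (Fin d → ℝ) => A p.1 p.2

/-- The expected excess 0-1 risk `E_{P^{⊗n}}[E_P(f̂_n)]` of an estimator. -/
def expectedExcess01 {d : ℕ} (P : Measure ((Fin d → ℝ) × ℝ)) {n : ℕ} (A : Estimator d n) : ℝ :=
  ∫ ω, excess01 P (A ω) ∂iid P n

/-- The covering number `N(F, γ)` (uniform norm over `Ω`), valued in `ℝ≥0∞`. -/
def coveringNumber {X : Type*} (Ω : Set X) (F : Set (X → ℝ)) (γ : ℝ) : ℝ≥0∞ :=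
  ⨅ (A : Finset (X → ℝ))
    (_ : ↑A ⊆ F ∧ ∀ f ∈ F, ∃ g ∈ A, ∀ x ∈ Ω, |f x - g x| ≤ γ),
    (A.card : ℝ≥0∞)

/-- `f` is an empirical `φ`-risk minimizer over `F` for the sample `ω`. -/
def IsERM {d n : ℕ} (φ : ℝ → ℝ) (F : Set ((Fin d → ℝ) → ℝ))
    (ω : Fin n → (Fin d → ℝ) × ℝ) (f : (Fin d → ℝ) → ℝ) : Prop :=
  f ∈ F ∧ ∀ g ∈ F,
    (n : ℝ)⁻¹ * ∑ i, φ ((ω i).2 * f ((ω i).1)) ≤ (n : ℝ)⁻¹ * ∑ i, φ ((ω i).2 * g ((ω i).1))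

/-! ## ReLU neural networks -/

/-- A feedforward ReLU network with input dimension `d`. -/
structure ReLUNet (d : ℕ) where
  L : ℕ
  width : ℕ → ℕ
  W : (i : ℕ) → Fin (width (i + 1)) → Fin (width i) → ℝ
  v : (i : ℕ) → Fin (width i) → ℝ
  h0 : width 0 = d
  hL : width (L + 1) = 1

/-- The `i`-th intermediate layer output `W_i σ_{v_i} ⋯ W_1 σ_{v_1} W_0 x`. -/
def ReLUNet.layer {d : ℕ} (net : ReLUNet d) (x : Fin (net.width 0) → ℝ) :
    (i : ℕ) → Fin (net.width (i + 1)) → ℝ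
  | 0 => fun j => ∑ k, net.W 0 j k * x k
  | i + 1 => fun j => ∑ k, net.W (i + 1) j k * max 0 (net.layer x i k - net.v (i + 1) k)

/-- The real-valued function computed by a ReLU network. -/
def ReLUNet.eval {d : ℕ} (net : ReLUNet d) (x : Fin d → ℝ) : ℝ :=
  net.layer (fun j => x (Fin.cast net.h0 j)) net.L (Fin.cast net.hL.symm 0)

/-- The class `F^NN_d(G, N, S, B, Fb)` of ReLU networks with depth `≤ G`, widths `≤ N`,
at most `S` nonzero parameters, parameter magnitudes `≤ B`, and uniform norm on the cube
`≤ Fb`. -/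
def FNN (d : ℕ) (G N : ℝ) (S : ℝ≥0∞) (B : ℝ) (Fb : ℝ≥0∞) : Set ((Fin d → ℝ) → ℝ) :=
  {f | ∃ net : ReLUNet d,
    (∀ x, f x = net.eval x) ∧
    (net.L : ℝ) ≤ G ∧
    (∀ i ≤ net.L + 1, (net.width i : ℝ) ≤ N) ∧
    ((∑ i ∈ Finset.range (net.L + 1),
        (Nat.card {p : Fin (net.width (i + 1)) × Fin (net.width i) // net.W i p.1 p.2 ≠ 0}
          : ℝ≥0∞)) +
      ∑ i ∈ Finset.range net.L,
        (Nat.card {j : Fin (net.width (i + 1)) // net.v (i + 1) j ≠ 0} : ℝ≥0∞)) ≤ S ∧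
    (∀ i ≤ net.L, ∀ j k, |net.W i j k| ≤ B) ∧
    (∀ i, 1 ≤ i → i ≤ net.L → ∀ j, |net.v i j| ≤ B) ∧
    ∀ x ∈ cube d, ENNReal.ofReal |f x| ≤ Fb}

/-! ## Kullback–Leibler divergence -/

open Classical in
/-- The Kullback–Leibler divergence. -/
def KL {X : Type*} [MeasurableSpace X] (P Q : Measure X) : ℝ≥0∞ :=
  if P ≪ Q ∧ Integrable (fun x => Real.log (P.rnDeriv Q x).toReal) P then
    ENNReal.ofReal (∫ x, Real.log (P.rnDeriv Q x).toReal ∂P)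
  else ∞

/-- The exponent `e / (dstar/(s+1) + (1 + 1/(s+1))·e)` of the minimax rate, for noise
exponent `s ∈ [0,∞]` (equal to `1` when `s = ∞`). -/
def rateExp (dstar : ℕ) (e : ℝ) (s : ℝ≥0∞) : ℝ :=
  if s = ∞ then 1
  else e / ((dstar : ℝ) / (s.toReal + 1) + (1 + 1 / (s.toReal + 1)) * e)

/-!
Under the noise condition with exponent `∞`, the margin `|2 η - 1|` is almost surely at least some
`t > 0`. A network that approximates `η` up to `t / 4`, shifted by `1 / 2`, scaled and truncated to
`[-1, 1]`, then agrees almost surely with the Bayes classifier, so the network class contains an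
optimal element and there is no approximation error. The margin also bounds the second moment of the
loss differences by their mean (Bernstein's condition); hence a union bound over a `1 / n`-net of
the network class, whose logarithmic cardinality is `O(log n)`, gives the rate `log n / n`.

The networks that approximate `η` are compositions of networks approximating the building blocks.
A Hölder function or maximum of few variables is, up to a small error, the maximum over a finite
net of points `p` of the cones `y ↦ g p - Λ * ∑ j, |y j - p j|`, and the number of these cones
depends only on a common modulus of continuity. This makes the size of the approximating network
independent of the input dimension and of the number of components in the composition.
-/

/-! ### I.i.d. samples and joint laws -/

lemma measurable_finSnoc {α : Type*} [MeasurableSpace α] (n : ℕ) :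
    Measurable fun x : (Fin n → α) × α => (Fin.snoc x.1 x.2 : Fin (n + 1) → α) := by
  refine measurable_pi_lambda _ (Fin.lastCases ?_ fun j => ?_)
  · simpa using measurable_snd
  · simpa using measurable_fst.eval

lemma pi_finSucc_eq_map_snoc {α : Type*} [MeasurableSpace α] (μ : Measure α) [SigmaFinite μ]
    (n : ℕ) :
    (Measure.pi fun _ : Fin (n + 1) => μ) =
      ((Measure.pi fun _ : Fin n => μ).prod μ).map fun x => Fin.snoc x.1 x.2 := by
  refine Measure.pi_eq fun s hs => ?_
  have hpre : (fun x : (Fin n → α) × α => (Fin.snoc x.1 x.2 : Fin (n + 1) → α)) ⁻¹' univ.pi s =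
      (univ.pi fun i => s i.castSucc) ×ˢ s (Fin.last n) := by
    ext x
    simp [Fin.forall_fin_succ']
  rw [Measure.map_apply (measurable_finSnoc n) (.univ_pi hs), hpre, Measure.prod_prod,
    Measure.pi_pi, Fin.prod_univ_castSucc]

lemma iid_eq_pi {α : Type*} [MeasurableSpace α] (μ : Measure α) [SigmaFinite μ] :
    ∀ n, iid μ n = Measure.pi fun _ : Fin n => μ
  | 0 => by rw [iid, Measure.pi_of_empty]; congr
  | n + 1 => by
    have hsnoc := measurable_finSnoc (α := α) n
    have hker (p : Fin n → α) : μ.map (fun a => (Fin.snoc p a : Fin (n + 1) → α)) =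
        (μ.map (Prod.mk p)).map fun x => Fin.snoc x.1 x.2 :=
      (Measure.map_map hsnoc measurable_prodMk_left).symm
    rw [iid, iid_eq_pi μ n, pi_finSucc_eq_map_snoc]
    ext s hs
    simp_rw [hker]
    have hκ : Measurable fun p : Fin n → α =>
        (μ.map (Prod.mk p)).map fun x => (Fin.snoc x.1 x.2 : Fin (n + 1) → α) :=
      (Measure.measurable_map _ hsnoc).comp Measurable.map_prodMk_left
    rw [Measure.bind_apply hs hκ.aemeasurable, Measure.map_apply hsnoc hs,
      Measure.prod_apply (hsnoc hs)]
    refine lintegral_congr fun p => ?_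
    rw [Measure.map_apply hsnoc hs, Measure.map_apply measurable_prodMk_left (hsnoc hs)]

lemma ae_iid_of_ae {α : Type*} [MeasurableSpace α] {μ : Measure α} [IsProbabilityMeasure μ]
    {p : α → Prop} (hp : ∀ᵐ x ∂μ, p x) (n : ℕ) : ∀ᵐ ω ∂iid μ n, ∀ i, p (ω i) := by
  rw [iid_eq_pi, ae_all_iff]
  exact fun i => (measurePreserving_eval (fun _ => μ) i).quasiMeasurePreserving.ae hp

lemma jointMeasure_eq {d : ℕ} {η : (Fin d → ℝ) → ℝ} (hη : Measurable η)
    (Q : Measure (Fin d → ℝ)) :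
    jointMeasure η Q =
      (Q.withDensity fun x => ENNReal.ofReal (η x)).map (fun x => (x, (1 : ℝ))) +
      (Q.withDensity fun x => ENNReal.ofReal (1 - η x)).map (fun x => (x, (-1 : ℝ))) := by
  have hpair (y : ℝ) : Measurable fun x : Fin d → ℝ => (x, y) := measurable_prodMk_right
  have hκ : Measurable fun x : Fin d → ℝ =>
      ENNReal.ofReal (η x) • Measure.dirac (x, (1 : ℝ)) +
        ENNReal.ofReal (1 - η x) • Measure.dirac (x, (-1 : ℝ)) := by
    refine Measure.measurable_of_measurable_coe _ fun s hs => ?_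
    have hdirac (y : ℝ) : Measurable fun x : Fin d → ℝ => Measure.dirac (x, y) s :=
      (Measure.measurable_coe hs).comp (Measure.measurable_dirac.comp (hpair y))
    simp only [Measure.add_apply, Measure.smul_apply, smul_eq_mul]
    fun_prop
  ext s hs
  rw [jointMeasure, Measure.bind_apply hs hκ.aemeasurable, Measure.add_apply,
    Measure.map_apply (hpair 1) hs, Measure.map_apply (hpair (-1)) hs,
    withDensity_apply _ (hpair 1 hs), withDensity_apply _ (hpair (-1) hs),
    ← lintegral_indicator (hpair 1 hs), ← lintegral_indicator (hpair (-1) hs),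
    ← lintegral_add_left (.indicator (by fun_prop) (hpair 1 hs))]
  exact lintegral_congr fun x => by
    simp [Measure.dirac_apply' _ hs, indicator]; rfl

namespace DataDist

variable {d : ℕ} (D : DataDist d)

instance isProbabilityMeasure_Q : IsProbabilityMeasure D.Q := D.Q_prob

lemma ae_mem_cube : ∀ᵐ x ∂D.Q, x ∈ cube d :=
  (prob_compl_eq_zero_iff <| .univ_pi fun _ => measurableSet_Icc).2 D.Q_cube

lemma ae_P_of_ae_Q {p : (Fin d → ℝ) × ℝ → Prop} (hp : ∀ᵐ x ∂D.Q, p (x, 1) ∧ p (x, -1)) :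
    ∀ᵐ z ∂D.P, p z := by
  have hmap {w : (Fin d → ℝ) → ℝ≥0∞} {y : ℝ} (h : ∀ᵐ x ∂D.Q, p (x, y)) :
      ∀ᵐ z ∂(D.Q.withDensity w).map (fun x => (x, y)), p z :=
    (MeasurableEmbedding.id.prodMk_right y).ae_map_iff.2
      ((withDensity_absolutelyContinuous _ _).ae_le h)
  rw [DataDist.P, jointMeasure_eq D.η_meas, ae_add_measure_iff]
  exact ⟨hmap (hp.mono fun _ h => h.1), hmap (hp.mono fun _ h => h.2)⟩

lemma integral_P {f : (Fin d → ℝ) × ℝ → ℝ} (hf : Integrable f D.P) :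
    ∫ z, f z ∂D.P = ∫ x, (D.η x * f (x, 1) + (1 - D.η x) * f (x, -1)) ∂D.Q := by
  have hemb (y : ℝ) : MeasurableEmbedding fun x : Fin d → ℝ => (x, y) :=
    MeasurableEmbedding.id.prodMk_right y
  have hη := D.η_meas
  have hfin {u : (Fin d → ℝ) → ℝ} : ∀ᵐ x ∂D.Q, ENNReal.ofReal (u x) < ∞ :=
    ae_of_all _ fun _ => ofReal_lt_top
  rw [DataDist.P, jointMeasure_eq hη] at hf ⊢
  have hpos := (hemb 1).integrable_map_iff.1 hf.left_of_add_measure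
  have hneg := (hemb (-1)).integrable_map_iff.1 hf.right_of_add_measure
  rw [integrable_withDensity_iff_integrable_smul' (by fun_prop) hfin] at hpos hneg
  rw [integral_add_measure hf.left_of_add_measure hf.right_of_add_measure,
    (hemb 1).integral_map, (hemb (-1)).integral_map,
    integral_withDensity_eq_integral_toReal_smul (by fun_prop) hfin,
    integral_withDensity_eq_integral_toReal_smul (by fun_prop) hfin]
  refine (integral_add hpos hneg).symm.trans ?_
  refine integral_congr_ae (ae_of_all _ fun x => ?_)
  have h := D.η_mem x
  simp [ENNReal.toReal_ofReal h.1, ENNReal.toReal_ofReal (sub_nonneg.2 h.2)]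

instance isProbabilityMeasure_P : IsProbabilityMeasure D.P := by
  have hsum (x : Fin d → ℝ) : ENNReal.ofReal (D.η x) + ENNReal.ofReal (1 - D.η x) = 1 := by
    rw [← ENNReal.ofReal_add (D.η_mem x).1 (sub_nonneg.2 (D.η_mem x).2), add_sub_cancel,
      ofReal_one]
  have hη := D.η_meas
  constructor
  rw [DataDist.P, jointMeasure_eq hη, Measure.add_apply,
    Measure.map_apply measurable_prodMk_right .univ,
    Measure.map_apply measurable_prodMk_right .univ, preimage_univ, preimage_univ,
    withDensity_apply _ .univ, withDensity_apply _ .univ, Measure.restrict_univ,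
    ← lintegral_add_left (by fun_prop)]
  simp [hsum]

end DataDist

/-! ### Hinge loss and the Bayes classifier -/

lemma measurable_sgn : Measurable sgn :=
  Measurable.ite measurableSet_Ici measurable_const measurable_const

lemma abs_sgn (t : ℝ) : |sgn t| = 1 := by
  unfold sgn; split_ifs <;> simp

lemma sgn_mem_labels (t : ℝ) : sgn t ∈ labels := by
  unfold sgn; split_ifs <;> simp [labels]

lemma sgn_sgn (t : ℝ) : sgn (sgn t) = sgn t := by
  unfold sgn; split_ifs <;> norm_num at *

lemma mul_sgn_self (a : ℝ) : a * sgn a = |a| := by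
  unfold sgn
  split_ifs with h
  · rw [abs_of_nonneg h, mul_one]
  · rw [abs_of_neg (not_le.1 h), mul_neg_one]

lemma mul_le_mul_sgn_self (a : ℝ) {g : ℝ} (hg : |g| ≤ 1) : a * g ≤ a * sgn a := by
  rw [mul_sgn_self]
  exact (le_abs_self _).trans (abs_mul a g ▸ mul_le_of_le_one_right (abs_nonneg a) hg)

lemma measurable_trunc (F : ℝ) : Measurable (trunc F) :=
  measurable_const.min (measurable_const.max measurable_id)

lemma abs_trunc_le {F : ℝ} (hF : 0 ≤ F) (t : ℝ) : |trunc F t| ≤ F :=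
  abs_le.2 ⟨le_min (by linarith) (le_max_left _ _), min_le_left _ _⟩

lemma trunc_of_abs_le {F t : ℝ} (h : |t| ≤ F) : trunc F t = t := by
  rw [trunc, max_eq_right (abs_le.1 h).1, min_eq_right (abs_le.1 h).2]

lemma abs_trunc_sub_trunc_le (F s t : ℝ) : |trunc F s - trunc F t| ≤ |s - t| := by
  refine (abs_min_sub_min_le_max _ _ _ _).trans ?_
  simpa using abs_max_sub_max_le_max (-F) s (-F) t

lemma abs_eq_one_of_mem_labels {y : ℝ} (hy : y ∈ labels) : |y| = 1 := by
  rcases hy with rfl | rfl <;> simp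

lemma hinge_mul_eq_one_sub {y t : ℝ} (hy : y ∈ labels) (ht : |t| ≤ 1) :
    hinge (y * t) = 1 - y * t := by
  have hyt : |y * t| ≤ 1 := by rwa [abs_mul, abs_eq_one_of_mem_labels hy, one_mul]
  exact max_eq_right (sub_nonneg.2 (abs_le.1 hyt).2)

lemma hinge_mul_trunc_le {y : ℝ} (hy : y ∈ labels) (t : ℝ) :
    hinge (y * trunc 1 t) ≤ hinge (y * t) := by
  rw [hinge_mul_eq_one_sub hy (abs_trunc_le zero_le_one t), hinge]
  rcases hy with rfl | rfl <;> grind [trunc]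

lemma mul_sgn_sub_sgn_le (a t : ℝ) :
    a * (sgn a - sgn t) ≤ 2 * (a * (sgn a - trunc 1 t)) := by
  unfold sgn trunc
  split_ifs with ha ht ht
  · nlinarith [min_le_left 1 (max (-1) t)]
  · have := (min_le_right 1 _).trans (max_le (by norm_num) (not_le.1 ht).le : max (-1) t ≤ 0)
    nlinarith
  · have : 0 ≤ min 1 (max (-1) t) := by simp [ht]
    nlinarith
  · have : -1 ≤ min 1 (max (-1) t) := by simp
    nlinarith

namespace DataDist

variable {d : ℕ} (D : DataDist d)

/-- The Bayes classifier, which minimizes the 0-1 risk. -/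
def bayes (x : Fin d → ℝ) : ℝ := sgn (2 * D.η x - 1)

lemma measurable_bayes : Measurable D.bayes :=
  measurable_sgn.comp ((D.η_meas.const_mul 2).sub_const 1)

lemma abs_bayes (x : Fin d → ℝ) : |D.bayes x| = 1 := abs_sgn _

lemma abs_bayes_sub_le (x : Fin d → ℝ) {s : ℝ} (hs : |s| ≤ 1) : |D.bayes x - s| ≤ 2 :=
  (abs_sub _ _).trans (by linarith [D.abs_bayes x])

lemma abs_two_mul_eta_sub_one_le (x : Fin d → ℝ) : |2 * D.η x - 1| ≤ 1 := by
  obtain ⟨h0, h1⟩ := D.η_mem x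
  exact abs_le.2 ⟨by linarith, by linarith⟩

lemma ae_mem_labels : ∀ᵐ z ∂D.P, z.2 ∈ labels :=
  D.ae_P_of_ae_Q (ae_of_all _ fun _ => by simp [labels])

lemma integrable_margin_mul {g : (Fin d → ℝ) → ℝ} (hg : Measurable g) {C : ℝ}
    (hC : ∀ x, |g x| ≤ C) : Integrable (fun x => (2 * D.η x - 1) * g x) D.Q := by
  have hη := D.η_meas
  refine Integrable.of_bound (by fun_prop) C (ae_of_all _ fun x => ?_)
  rw [norm_mul]
  exact (mul_le_of_le_one_left (norm_nonneg _) (D.abs_two_mul_eta_sub_one_le x)).trans (hC x)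

lemma risk01_eq {f : (Fin d → ℝ) → ℝ} (hf : Measurable f) :
    risk01 D.P f = (1 - ∫ x, (2 * D.η x - 1) * sgn (f x) ∂D.Q) / 2 := by
  set E := {z : (Fin d → ℝ) × ℝ | sgn (f z.1) ≠ z.2}
  have hE : MeasurableSet E :=
    (measurableSet_eq_fun (measurable_sgn.comp (hf.comp measurable_fst)) measurable_snd).compl
  have hint : Integrable (fun x => (2 * D.η x - 1) * sgn (f x)) D.Q :=
    D.integrable_margin_mul (measurable_sgn.comp hf) fun x => (abs_sgn (f x)).le
  have hcond (x : Fin d → ℝ) : D.η x * E.indicator 1 (x, 1) +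
      (1 - D.η x) * E.indicator 1 (x, -1) = 1 / 2 - 1 / 2 * ((2 * D.η x - 1) * sgn (f x)) := by
    have hsgn : sgn (f x) = -1 ∨ sgn (f x) = 1 := sgn_mem_labels _
    rcases hsgn with h | h <;> norm_num [E, h, indicator] <;> ring
  calc risk01 D.P f
      = ∫ z, E.indicator 1 z ∂D.P := (integral_indicator_one hE).symm
    _ = ∫ x, (1 / 2 - 1 / 2 * ((2 * D.η x - 1) * sgn (f x))) ∂D.Q :=
        (D.integral_P ((integrable_const (1 : ℝ)).indicator hE)).trans
          (integral_congr_ae (ae_of_all _ hcond))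
    _ = (1 - ∫ x, (2 * D.η x - 1) * sgn (f x) ∂D.Q) / 2 := by
        rw [integral_sub (integrable_const _) (hint.const_mul _), integral_const_mul]
        simp only [integral_const, probReal_univ, one_smul]
        ring

lemma risk01_bayes_le {f : (Fin d → ℝ) → ℝ} (hf : Measurable f) :
    risk01 D.P D.bayes ≤ risk01 D.P f := by
  rw [D.risk01_eq D.measurable_bayes, D.risk01_eq hf]
  gcongr ?_ / 2
  refine sub_le_sub_left (integral_mono ?_ ?_ fun x => ?_) 1
  · exact D.integrable_margin_mul (measurable_sgn.comp hf) fun x => (abs_sgn _).le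
  · exact D.integrable_margin_mul (measurable_sgn.comp D.measurable_bayes)
      fun x => (abs_sgn _).le
  · simpa only [bayes, sgn_sgn] using mul_le_mul_sgn_self _ (abs_sgn _).le

/-- The excess hinge risk of a `[-1, 1]`-valued function, on which the hinge loss is affine. -/
def hingeExcess (g : (Fin d → ℝ) → ℝ) : ℝ :=
  ∫ x, (2 * D.η x - 1) * (D.bayes x - g x) ∂D.Q

lemma integrable_hingeExcess {g : (Fin d → ℝ) → ℝ} (hg : Measurable g) (hg1 : ∀ x, |g x| ≤ 1) :
    Integrable (fun x => (2 * D.η x - 1) * (D.bayes x - g x)) D.Q :=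
  D.integrable_margin_mul (D.measurable_bayes.sub hg) fun x => D.abs_bayes_sub_le x (hg1 x)

lemma excess01_le_hingeExcess_trunc {f : (Fin d → ℝ) → ℝ} (hf : Measurable f) :
    excess01 D.P f ≤ D.hingeExcess fun x => trunc 1 (f x) := by
  have hbayes : risk01 D.P D.bayes ≤ bayes01 D.P :=
    have : Nonempty {g : (Fin d → ℝ) → ℝ // Measurable g} := ⟨f, hf⟩
    le_ciInf fun g => D.risk01_bayes_le g.2
  have hb := D.integrable_margin_mul D.measurable_bayes fun x => (D.abs_bayes x).le
  have hf' : Integrable (fun x => (2 * D.η x - 1) * sgn (f x)) D.Q :=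
    D.integrable_margin_mul (measurable_sgn.comp hf) fun x => (abs_sgn (f x)).le
  have hexc : Integrable (fun x => (2 * D.η x - 1) * (D.bayes x - trunc 1 (f x))) D.Q :=
    D.integrable_hingeExcess ((measurable_trunc 1).comp hf)
      fun x => abs_trunc_le zero_le_one (f x)
  have hmono : ∫ x, (2 * D.η x - 1) * D.bayes x ∂D.Q - ∫ x, (2 * D.η x - 1) * sgn (f x) ∂D.Q ≤
      2 * D.hingeExcess fun x => trunc 1 (f x) := by
    rw [hingeExcess, ← integral_const_mul, ← integral_sub hb hf']
    refine integral_mono (hb.sub hf') (hexc.const_mul 2) fun x => ?_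
    exact (mul_sub _ _ _).symm.trans_le (mul_sgn_sub_sgn_le _ _)
  calc excess01 D.P f ≤ risk01 D.P f - risk01 D.P D.bayes := sub_le_sub_left hbayes _
    _ ≤ D.hingeExcess fun x => trunc 1 (f x) := by
        rw [D.risk01_eq hf, D.risk01_eq D.measurable_bayes]
        simp only [bayes, sgn_sgn] at hmono ⊢
        linarith

lemma hingeExcess_le_add {f g : (Fin d → ℝ) → ℝ} (hf : Measurable f) (hf1 : ∀ x, |f x| ≤ 1)
    (hg : Measurable g) (hg1 : ∀ x, |g x| ≤ 1) {ε : ℝ} (hfg : ∀ x ∈ cube d, |f x - g x| ≤ ε) :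
    D.hingeExcess f ≤ D.hingeExcess g + ε := by
  have hgi := D.integrable_hingeExcess hg hg1
  calc D.hingeExcess f ≤ ∫ x, ((2 * D.η x - 1) * (D.bayes x - g x) + ε) ∂D.Q := by
        refine integral_mono_ae (D.integrable_hingeExcess hf hf1) (hgi.add (integrable_const ε)) ?_
        filter_upwards [D.ae_mem_cube] with x hx
        have hdiff : (2 * D.η x - 1) * (g x - f x) ≤ ε := by
          refine (le_abs_self _).trans ?_
          rw [abs_mul, abs_sub_comm (g x)]
          exact (mul_le_of_le_one_left (abs_nonneg _) (D.abs_two_mul_eta_sub_one_le x)).trans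
            (hfg x hx)
        linarith
    _ = D.hingeExcess g + ε := by
        rw [integral_add hgi (integrable_const ε)]
        simp [hingeExcess]

end DataDist

/-! ### Fast rates under a margin condition -/

lemma two_point_exp_le {p t u : ℝ} (hp : p ∈ Icc (0 : ℝ) 1) (ht : 0 ≤ t) (htp : t ≤ |2 * p - 1|)
    (hu : |u| ≤ 2) (hpu : 0 ≤ (2 * p - 1) * u) :
    p * Real.exp (-(t / 4) * u) + (1 - p) * Real.exp (t / 4 * u) ≤
      1 - t / 8 * ((2 * p - 1) * u) := by
  have hexp {v : ℝ} (hv : |v| ≤ 1) : Real.exp v ≤ 1 + v + v ^ 2 := by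
    linarith [(abs_le.1 (Real.abs_exp_sub_one_sub_id_le hv)).2]
  have ht1 : t ≤ 1 := htp.trans (abs_le.2 ⟨by linarith [hp.1], by linarith [hp.2]⟩)
  have hv : |t / 4 * u| ≤ 1 := by
    rw [abs_mul, abs_of_nonneg (by positivity)]
    nlinarith [abs_nonneg u]
  have hneg : Real.exp (-(t / 4) * u) ≤ 1 + -(t / 4) * u + (-(t / 4) * u) ^ 2 :=
    hexp (by rwa [neg_mul, abs_neg])
  have hvar : t * u ^ 2 ≤ 2 * ((2 * p - 1) * u) :=
    calc t * u ^ 2 = t * |u| * |u| := by rw [mul_assoc, ← sq, sq_abs]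
      _ ≤ |2 * p - 1| * |u| * 2 := by gcongr
      _ = 2 * ((2 * p - 1) * u) := by rw [← abs_mul, abs_of_nonneg hpu, mul_comm]
  linarith [mul_le_mul_of_nonneg_left hneg hp.1,
    mul_le_mul_of_nonneg_left (hexp hv) (sub_nonneg.2 hp.2), mul_le_mul_of_nonneg_left hvar ht]

lemma integral_le_add_mul_log_card {Ω J : Type*} [MeasurableSpace Ω] {μ : Measure Ω}
    [IsProbabilityMeasure μ] [Fintype J] [Nonempty J] {X : J → Ω → ℝ}
    (hX : ∀ j, Integrable (fun ω => Real.exp (X j ω)) μ)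
    (hX1 : ∀ j, ∫ ω, Real.exp (X j ω) ∂μ ≤ 1) {a b : ℝ} (ha : 0 ≤ a) (hb : 0 ≤ b)
    {Z : Ω → ℝ} (hZ : ∀ᵐ ω ∂μ, ∃ j, Z ω ≤ a + b * X j ω) :
    ∫ ω, Z ω ∂μ ≤ a + b * Real.log (Fintype.card J) := by
  set m : ℝ := (Fintype.card J : ℝ)
  have hm : 0 < m := Nat.cast_pos.2 Fintype.card_pos
  by_cases hint : Integrable Z μ
  swap
  · have := Real.log_natCast_nonneg (Fintype.card J)
    rw [integral_undef hint]
    positivity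
  have hsum : Integrable (fun ω => ∑ j, Real.exp (X j ω)) μ :=
    integrable_finsetSum _ fun j _ => hX j
  have hsum_le : ∫ ω, ∑ j, Real.exp (X j ω) ∂μ ≤ m := by
    rw [integral_finsetSum _ fun j _ => hX j]
    exact (Finset.sum_le_sum fun j _ => hX1 j).trans (by simp [m])
  have hX_le (ω : Ω) (j : J) : X j ω ≤ Real.log m - 1 + m⁻¹ * ∑ k, Real.exp (X k ω) := by
    have h := Real.add_one_le_exp (X j ω - Real.log m)
    rw [Real.exp_sub, Real.exp_log hm, div_eq_inv_mul] at h
    have hj : Real.exp (X j ω) ≤ ∑ k, Real.exp (X k ω) :=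
      Finset.single_le_sum (f := fun k => Real.exp (X k ω)) (fun k _ => Real.exp_nonneg _)
        (Finset.mem_univ j)
    linarith [mul_le_mul_of_nonneg_left hj (inv_nonneg.2 hm.le)]
  calc ∫ ω, Z ω ∂μ
      ≤ ∫ ω, (a + b * (Real.log m - 1) + b * m⁻¹ * ∑ k, Real.exp (X k ω)) ∂μ := by
        refine integral_mono_ae hint ((integrable_const _).add (hsum.const_mul _)) ?_
        filter_upwards [hZ] with ω ⟨j, hj⟩
        linarith [mul_le_mul_of_nonneg_left (hX_le ω j) hb]
    _ = a + b * (Real.log m - 1) + b * m⁻¹ * ∫ ω, ∑ k, Real.exp (X k ω) ∂μ := by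
        rw [integral_add (integrable_const _) (hsum.const_mul _), integral_const_mul]
        simp
    _ ≤ a + b * (Real.log m - 1) + b * m⁻¹ * m := by gcongr
    _ = a + b * Real.log m := by field_simp; ring

namespace DataDist

variable {d : ℕ} (D : DataDist d)

/-- The excess hinge loss of a `[-1, 1]`-valued function `g` at a labelled point; its
expectation is `D.hingeExcess g`. -/
def excessLoss (g : (Fin d → ℝ) → ℝ) (z : (Fin d → ℝ) × ℝ) : ℝ := z.2 * (D.bayes z.1 - g z.1)

variable {D} {g : (Fin d → ℝ) → ℝ}

lemma measurable_excessLoss (hg : Measurable g) : Measurable (D.excessLoss g) :=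
  measurable_snd.mul ((D.measurable_bayes.sub hg).comp measurable_fst)

lemma integrable_exp_mul_excessLoss (hg : Measurable g) (hg1 : ∀ x, |g x| ≤ 1) (s : ℝ) :
    Integrable (fun z => Real.exp (s * D.excessLoss g z)) D.P := by
  refine ProbabilityTheory.integrable_exp_mul_of_mem_Icc (a := -2) (b := 2)
    (measurable_excessLoss hg).aemeasurable ?_
  filter_upwards [D.ae_mem_labels] with z hz
  rw [mem_Icc, ← abs_le, excessLoss, abs_mul, abs_eq_one_of_mem_labels hz, one_mul]
  exact D.abs_bayes_sub_le _ (hg1 _)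

lemma mgf_excessLoss_le {t : ℝ} (ht : 0 ≤ t) (hmargin : ∀ᵐ x ∂D.Q, t ≤ |2 * D.η x - 1|)
    (hg : Measurable g) (hg1 : ∀ x, |g x| ≤ 1) :
    ProbabilityTheory.mgf (D.excessLoss g) D.P (-(t / 4)) ≤
      Real.exp (-(t / 8 * D.hingeExcess g)) := by
  have hexc := D.integrable_hingeExcess hg hg1
  have hint : Integrable (fun x => 1 - t / 8 * ((2 * D.η x - 1) * (D.bayes x - g x))) D.Q :=
    (integrable_const 1).sub (hexc.const_mul _)
  have htwo : ∀ᵐ x ∂D.Q, D.η x * Real.exp (-(t / 4) * D.excessLoss g (x, 1)) +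
      (1 - D.η x) * Real.exp (-(t / 4) * D.excessLoss g (x, -1)) ≤
        1 - t / 8 * ((2 * D.η x - 1) * (D.bayes x - g x)) := by
    filter_upwards [hmargin] with x hx
    have hnonneg : 0 ≤ (2 * D.η x - 1) * (D.bayes x - g x) := by
      rw [mul_sub]
      exact sub_nonneg.2 (mul_le_mul_sgn_self _ (hg1 x))
    have h := two_point_exp_le (D.η_mem x) ht hx (D.abs_bayes_sub_le x (hg1 x)) hnonneg
    simp only [excessLoss]
    ring_nf at h ⊢
    exact h
  have hnn (x : Fin d → ℝ) : 0 ≤ D.η x * Real.exp (-(t / 4) * D.excessLoss g (x, 1)) +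
      (1 - D.η x) * Real.exp (-(t / 4) * D.excessLoss g (x, -1)) :=
    add_nonneg (mul_nonneg (D.η_mem x).1 (Real.exp_nonneg _))
      (mul_nonneg (sub_nonneg.2 (D.η_mem x).2) (Real.exp_nonneg _))
  calc ∫ z, Real.exp (-(t / 4) * D.excessLoss g z) ∂D.P
      ≤ ∫ x, (1 - t / 8 * ((2 * D.η x - 1) * (D.bayes x - g x))) ∂D.Q := by
        rw [D.integral_P (integrable_exp_mul_excessLoss hg hg1 _)]
        exact integral_mono_of_nonneg (ae_of_all _ hnn) hint htwo
    _ = -(t / 8 * D.hingeExcess g) + 1 := by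
        rw [integral_sub (integrable_const 1) (hexc.const_mul _), integral_const_mul]
        simp only [integral_const, probReal_univ, one_smul, hingeExcess]
        ring
    _ ≤ Real.exp (-(t / 8 * D.hingeExcess g)) := Real.add_one_le_exp _

variable (D) in
/-- The normalized deviation of the empirical from the expected excess hinge risk of `g`, tuned
so that its exponential moment is at most one under the margin condition `t ≤ |2η - 1|`. -/
def deviation (t : ℝ) {n : ℕ} (g : (Fin d → ℝ) → ℝ) (ω : Fin n → (Fin d → ℝ) × ℝ) : ℝ :=
  t / 4 * (n * D.hingeExcess g / 2 - ∑ i, D.excessLoss g (ω i))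

lemma exp_deviation (t : ℝ) {n : ℕ} (g : (Fin d → ℝ) → ℝ) (ω : Fin n → (Fin d → ℝ) × ℝ) :
    Real.exp (D.deviation t g ω) = Real.exp (t / 8 * D.hingeExcess g) ^ n *
      ∏ i, Real.exp (-(t / 4) * D.excessLoss g (ω i)) := by
  rw [← Real.exp_sum, ← Real.exp_nat_mul, ← Real.exp_add, ← Finset.mul_sum, deviation]
  ring_nf

lemma integrable_exp_deviation (t : ℝ) (n : ℕ) (hg : Measurable g) (hg1 : ∀ x, |g x| ≤ 1) :
    Integrable (fun ω => Real.exp (D.deviation t g ω)) (iid D.P n) := by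
  simp_rw [exp_deviation, iid_eq_pi]
  exact (Integrable.fintype_prod fun _ => integrable_exp_mul_excessLoss hg hg1 _).const_mul _

lemma integral_exp_deviation_le_one {t : ℝ} (ht : 0 ≤ t)
    (hmargin : ∀ᵐ x ∂D.Q, t ≤ |2 * D.η x - 1|) (n : ℕ) (hg : Measurable g)
    (hg1 : ∀ x, |g x| ≤ 1) : ∫ ω, Real.exp (D.deviation t g ω) ∂iid D.P n ≤ 1 := by
  have hmgf : Real.exp (t / 8 * D.hingeExcess g) *
      ProbabilityTheory.mgf (D.excessLoss g) D.P (-(t / 4)) ≤ 1 := by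
    rw [← le_inv_mul_iff₀ (Real.exp_pos _), mul_one, ← Real.exp_neg]
    exact mgf_excessLoss_le ht hmargin hg hg1
  simp_rw [exp_deviation, iid_eq_pi]
  rw [integral_const_mul,
    integral_fintype_prod_eq_pow fun z => Real.exp (-(t / 4) * D.excessLoss g z),
    Fintype.card_fin, ← mul_pow]
  exact pow_le_one₀ (mul_nonneg (Real.exp_nonneg _) ProbabilityTheory.mgf_nonneg) hmgf

lemma sum_excessLoss_trunc_le {n : ℕ} {ω : Fin n → (Fin d → ℝ) × ℝ} {f f₀ c : (Fin d → ℝ) → ℝ}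
    (hω : ∀ i, (ω i).1 ∈ cube d ∧ (ω i).2 ∈ labels ∧ f₀ (ω i).1 = D.bayes (ω i).1)
    (hrisk : ∑ i, hinge ((ω i).2 * f (ω i).1) ≤ ∑ i, hinge ((ω i).2 * f₀ (ω i).1)) {ε : ℝ}
    (hfc : ∀ x ∈ cube d, |f x - c x| ≤ ε) :
    ∑ i, D.excessLoss (fun x => trunc 1 (c x)) (ω i) ≤ n * ε := by
  have hterm (i : Fin n) : D.excessLoss (fun x => trunc 1 (c x)) (ω i) ≤
      hinge ((ω i).2 * f (ω i).1) - hinge ((ω i).2 * f₀ (ω i).1) + ε := by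
    obtain ⟨hx, hy, hf₀⟩ := hω i
    have hclose : (ω i).2 * (trunc 1 (f (ω i).1) - trunc 1 (c (ω i).1)) ≤ ε := by
      refine (le_abs_self _).trans ?_
      rw [abs_mul, abs_eq_one_of_mem_labels hy, one_mul]
      exact (abs_trunc_sub_trunc_le _ _ _).trans (hfc _ hx)
    have hf := hinge_mul_trunc_le hy (f (ω i).1)
    rw [hinge_mul_eq_one_sub hy (abs_trunc_le zero_le_one _)] at hf
    rw [hf₀, hinge_mul_eq_one_sub hy (D.abs_bayes _).le, excessLoss]
    linarith
  calc ∑ i, D.excessLoss (fun x => trunc 1 (c x)) (ω i)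
      ≤ ∑ i, (hinge ((ω i).2 * f (ω i).1) - hinge ((ω i).2 * f₀ (ω i).1) + ε) :=
        Finset.sum_le_sum fun i _ => hterm i
    _ ≤ n * ε := by
        rw [Finset.sum_add_distrib, Finset.sum_sub_distrib, Finset.sum_const, Finset.card_univ,
          Fintype.card_fin, nsmul_eq_mul]
        linarith

lemma hingeExcess_eq_deviation_add {t : ℝ} (ht : 0 < t) {n : ℕ} (hn : 0 < n)
    (ω : Fin n → (Fin d → ℝ) × ℝ) :
    D.hingeExcess g =
      8 / (n * t) * D.deviation t g ω + 2 / n * ∑ i, D.excessLoss g (ω i) := by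
  rw [deviation]
  field_simp
  ring

theorem expectedExcess01_le {t : ℝ} (ht : 0 < t) (hmargin : ∀ᵐ x ∂D.Q, t ≤ |2 * D.η x - 1|)
    {f₀ : (Fin d → ℝ) → ℝ} (hf₀ : ∀ᵐ x ∂D.Q, f₀ x = D.bayes x) {n : ℕ} (hn : 0 < n)
    {A : Estimator d n} (hA : A.Meas)
    (hrisk : ∀ ω, ∑ i, hinge ((ω i).2 * A ω (ω i).1) ≤ ∑ i, hinge ((ω i).2 * f₀ (ω i).1))
    {T : Finset ((Fin d → ℝ) → ℝ)} (hT : ∀ c ∈ T, Measurable c) {ε : ℝ} (hε : 0 ≤ ε)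
    (hcover : ∀ ω, ∃ c ∈ T, ∀ x ∈ cube d, |A ω x - c x| ≤ ε) :
    expectedExcess01 D.P A ≤ 3 * ε + 8 / (n * t) * Real.log T.card := by
  let g (c : T) (x : Fin d → ℝ) : ℝ := trunc 1 (c.1 x)
  have hg (c : T) : Measurable (g c) := (measurable_trunc 1).comp (hT c c.2)
  have hg1 (c : T) (x : Fin d → ℝ) : |g c x| ≤ 1 := abs_trunc_le zero_le_one _
  have : Nonempty T := let ⟨c, hc, _⟩ := hcover default; ⟨⟨c, hc⟩⟩
  have : IsProbabilityMeasure (iid D.P n) := by rw [iid_eq_pi]; infer_instance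
  have hgood : ∀ᵐ z ∂D.P, z.1 ∈ cube d ∧ z.2 ∈ labels ∧ f₀ z.1 = D.bayes z.1 := by
    refine D.ae_P_of_ae_Q ?_
    filter_upwards [D.ae_mem_cube, hf₀] with x hx hfx
    simp [hx, hfx, labels]
  rw [← Fintype.card_coe T]
  refine integral_le_add_mul_log_card (fun c => integrable_exp_deviation t n (hg c) (hg1 c))
    (fun c => integral_exp_deviation_le_one ht.le hmargin n (hg c) (hg1 c)) (by positivity)
    (by positivity) ?_
  filter_upwards [ae_iid_of_ae hgood n] with ω hω
  obtain ⟨c, hcT, hc⟩ := hcover ω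
  have hAω : Measurable (A ω) := hA.comp measurable_prodMk_left
  have hsum := sum_excessLoss_trunc_le hω (hrisk ω) hc
  refine ⟨⟨c, hcT⟩, ?_⟩
  calc excess01 D.P (A ω)
      ≤ D.hingeExcess fun x => trunc 1 (A ω x) := D.excess01_le_hingeExcess_trunc hAω
    _ ≤ D.hingeExcess (g ⟨c, hcT⟩) + ε :=
        D.hingeExcess_le_add ((measurable_trunc 1).comp hAω) (fun x => abs_trunc_le zero_le_one _)
          (hg _) (hg1 _) fun x hx => (abs_trunc_sub_trunc_le _ _ _).trans (hc x hx)
    _ = 8 / (n * t) * D.deviation t (g ⟨c, hcT⟩) ω +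
          2 / n * ∑ i, D.excessLoss (g ⟨c, hcT⟩) (ω i) + ε := by
        rw [← hingeExcess_eq_deviation_add ht hn]
    _ ≤ 8 / (n * t) * D.deviation t (g ⟨c, hcT⟩) ω + 2 / n * (n * ε) + ε := by gcongr
    _ = 3 * ε + 8 / (n * t) * D.deviation t (g ⟨c, hcT⟩) ω := by field_simp; ring

end DataDist

/-! ### Covering numbers of network classes -/

/-- The layers of a network whose layers all have the same set `ι` of neurons, before
activation; networks of bounded size are embedded into this form to be discretised. -/
def wideLayer {ι : Type*} [Fintype ι] (W : ℕ → ι → ι → ℝ) (v : ℕ → ι → ℝ) (x : ι → ℝ) :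
    ℕ → ι → ℝ
  | 0 => fun j => ∑ k, W 0 j k * x k
  | i + 1 => fun j => ∑ k, W (i + 1) j k * max 0 (wideLayer W v x i k - v (i + 1) k)

section Perturbation

variable {ι : Type*} [Fintype ι]

lemma abs_sum_mul_le {a y : ι → ℝ} {A Y : ℝ} (ha : ∀ k, |a k| ≤ A) (hy : ∀ k, |y k| ≤ Y) :
    |∑ k, a k * y k| ≤ Fintype.card ι * (A * Y) := by
  refine (Finset.abs_sum_le_sum_abs _ _).trans ?_
  rw [← nsmul_eq_mul]
  refine Finset.sum_le_card_nsmul _ _ _ fun k _ => ?_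
  rw [abs_mul]
  exact mul_le_mul (ha k) (hy k) (abs_nonneg _) ((abs_nonneg _).trans (ha k))

lemma abs_sum_mul_sub_sum_mul_le {a a' y y' : ι → ℝ} {δ B Y Δ : ℝ}
    (haa : ∀ k, |a k - a' k| ≤ δ) (ha' : ∀ k, |a' k| ≤ B) (hy : ∀ k, |y k| ≤ Y)
    (hyy : ∀ k, |y k - y' k| ≤ Δ) :
    |∑ k, a k * y k - ∑ k, a' k * y' k| ≤ Fintype.card ι * (δ * Y + B * Δ) :=
  calc |∑ k, a k * y k - ∑ k, a' k * y' k|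
      = |∑ k, (a k - a' k) * y k + ∑ k, a' k * (y k - y' k)| := by
        rw [← Finset.sum_sub_distrib, ← Finset.sum_add_distrib]
        congr 1
        exact Finset.sum_congr rfl fun k _ => by ring
    _ ≤ Fintype.card ι * (δ * Y) + Fintype.card ι * (B * Δ) :=
        (abs_add_le _ _).trans (add_le_add (abs_sum_mul_le haa hy) (abs_sum_mul_le ha' hyy))
    _ = Fintype.card ι * (δ * Y + B * Δ) := by ring

lemma abs_max_zero_sub_le (p s : ℝ) : |max 0 (p - s)| ≤ |p| + |s| := by
  rw [abs_of_nonneg (le_max_left _ _)]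
  exact max_le (by positivity) ((le_abs_self _).trans (abs_sub _ _))

lemma abs_max_zero_sub_sub_le (p s p' s' : ℝ) :
    |max 0 (p - s) - max 0 (p' - s')| ≤ |p - p'| + |s - s'| := by
  refine (abs_max_sub_max_le_max 0 (p - s) 0 (p' - s')).trans ?_
  rw [sub_self, abs_zero, sub_sub_sub_comm]
  exact max_le (by positivity) (abs_sub _ _)

variable [Nonempty ι] {W W' : ℕ → ι → ι → ℝ} {v v' : ℕ → ι → ℝ} {x : ι → ℝ} {B δ : ℝ}

lemma le_four_card_mul_pow (hB : 1 ≤ B) (i : ℕ) : B ≤ (4 * Fintype.card ι * B) ^ (i + 1) := by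
  have hcard : (1 : ℝ) ≤ Fintype.card ι := by exact_mod_cast Fintype.card_pos (α := ι)
  have hle : B ≤ 4 * Fintype.card ι * B := le_mul_of_one_le_left (by linarith) (by linarith)
  exact hle.trans (le_self_pow₀ (hB.trans hle) (by omega))

lemma abs_wideLayer_le (hB : 1 ≤ B) (hx : ∀ k, |x k| ≤ 1) (hW : ∀ i j k, |W i j k| ≤ B)
    (hv : ∀ i k, |v i k| ≤ B) :
    ∀ i j, |wideLayer W v x i j| ≤ (4 * Fintype.card ι * B) ^ (i + 1)
  | 0, j => by
    refine (abs_sum_mul_le (hW 0 j) hx).trans ?_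
    rw [zero_add, pow_one]
    nlinarith [mul_nonneg (Nat.cast_nonneg' (α := ℝ) (Fintype.card ι)) (zero_le_one.trans hB)]
  | i + 1, j => by
    set R := (4 * Fintype.card ι * B) ^ (i + 1)
    have hBR : B ≤ R := le_four_card_mul_pow hB i
    have hact (k : ι) : |max 0 (wideLayer W v x i k - v (i + 1) k)| ≤ R + B :=
      (abs_max_zero_sub_le _ _).trans
        (add_le_add (abs_wideLayer_le hB hx hW hv i k) (hv (i + 1) k))
    calc |wideLayer W v x (i + 1) j| ≤ Fintype.card ι * (B * (R + B)) :=
          abs_sum_mul_le (hW (i + 1) j) hact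
      _ ≤ Fintype.card ι * (B * (4 * R)) := by gcongr; linarith
      _ = (4 * Fintype.card ι * B) ^ (i + 1 + 1) := by rw [pow_succ]; ring

lemma abs_wideLayer_sub_le (hB : 1 ≤ B) (hδ : 0 ≤ δ) (hx : ∀ k, |x k| ≤ 1)
    (hW : ∀ i j k, |W i j k| ≤ B) (hv : ∀ i k, |v i k| ≤ B) (hW' : ∀ i j k, |W' i j k| ≤ B)
    (hWW : ∀ i j k, |W i j k - W' i j k| ≤ δ) (hvv : ∀ i k, |v i k - v' i k| ≤ δ) :
    ∀ i j, |wideLayer W v x i j - wideLayer W' v' x i j| ≤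
      δ * (4 * Fintype.card ι * B) ^ (i + 1)
  | 0, j => by
    refine (abs_sum_mul_sub_sum_mul_le (hWW 0 j) (hW' 0 j) hx (Δ := 0) (by simp)).trans ?_
    have : 0 ≤ δ * Fintype.card ι := by positivity
    rw [zero_add, pow_one]
    nlinarith
  | i + 1, j => by
    set R := (4 * Fintype.card ι * B) ^ (i + 1)
    have hBR : B ≤ R := le_four_card_mul_pow hB i
    have hact (k : ι) : |max 0 (wideLayer W v x i k - v (i + 1) k)| ≤ R + B :=
      (abs_max_zero_sub_le _ _).trans
        (add_le_add (abs_wideLayer_le hB hx hW hv i k) (hv (i + 1) k))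
    have hact_sub (k : ι) : |max 0 (wideLayer W v x i k - v (i + 1) k) -
        max 0 (wideLayer W' v' x i k - v' (i + 1) k)| ≤ δ * R + δ :=
      (abs_max_zero_sub_sub_le _ _ _ _).trans
        (add_le_add (abs_wideLayer_sub_le hB hδ hx hW hv hW' hWW hvv i k) (hvv (i + 1) k))
    have hcoef : δ * (R + B) + B * (δ * R + δ) ≤ B * (δ * (4 * R)) := by
      nlinarith [mul_nonneg hδ (sub_nonneg.2 hBR), mul_nonneg hδ (sub_nonneg.2 hB),
        mul_nonneg (mul_nonneg hδ (sub_nonneg.2 hB)) (sub_nonneg.2 (hB.trans hBR))]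
    calc |wideLayer W v x (i + 1) j - wideLayer W' v' x (i + 1) j|
        ≤ Fintype.card ι * (δ * (R + B) + B * (δ * R + δ)) :=
          abs_sum_mul_sub_sum_mul_le (hWW (i + 1) j) (hW' (i + 1) j) hact hact_sub
      _ ≤ Fintype.card ι * (B * (δ * (4 * R))) := by gcongr
      _ = δ * (4 * Fintype.card ι * B) ^ (i + 1 + 1) := by rw [pow_succ]; ring

end Perturbation

section Embedding

variable {d : ℕ}

/-- The input `x` written on the first `d` of `w` neurons, and `0` on the others. -/
def padInput (w : ℕ) (x : Fin d → ℝ) (k : Fin w) : ℝ := if h : k.1 < d then x ⟨k, h⟩ else 0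

lemma measurable_padInput (w : ℕ) : Measurable (padInput w : (Fin d → ℝ) → Fin w → ℝ) := by
  refine measurable_pi_lambda _ fun k => ?_
  unfold padInput
  split_ifs with h
  exacts [measurable_pi_apply _, measurable_const]

lemma abs_padInput_le {x : Fin d → ℝ} (hx : x ∈ cube d) {w : ℕ} (k : Fin w) :
    |padInput w x k| ≤ 1 := by
  unfold padInput
  split_ifs with h
  · have hxk := hx ⟨k, h⟩ (mem_univ _)
    exact abs_le.2 ⟨by linarith [hxk.1], hxk.2⟩
  · simp

lemma measurable_wideLayer {ι : Type*} [Fintype ι] (W : ℕ → ι → ι → ℝ) (v : ℕ → ι → ℝ) :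
    ∀ i j, Measurable fun x => wideLayer W v x i j
  | 0, _ => Finset.measurable_sum _ fun k _ => (measurable_pi_apply k).const_mul _
  | i + 1, _ => Finset.measurable_sum _ fun k _ =>
      (measurable_const.max ((measurable_wideLayer W v i k).sub_const _)).const_mul _

/-- The indices of the parameters of a network with at most `w` layers of `w` neurons:
`(i, some j, k)` is the weight from `k` to `j` in layer `i`, and `(i, none, k)` the shift of the
`k`-th input of layer `i`. -/
abbrev WideIndex (w : ℕ) : Type := Fin w × Option (Fin w) × Fin w

/-- The function computed by the network with `m + 1` neurons per layer, depth `L ≤ m` and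
parameters `θ`, read off at the neuron `0`. -/
def wideEval {m : ℕ} (θ : WideIndex (m + 1) → ℝ) (L : ℕ) (x : Fin d → ℝ) : ℝ :=
  wideLayer (fun i j k => θ (Fin.ofNat (m + 1) i, some j, k))
    (fun i k => θ (Fin.ofNat (m + 1) i, none, k)) (padInput (m + 1) x) L 0

lemma measurable_wideEval {m : ℕ} (θ : WideIndex (m + 1) → ℝ) (L : ℕ) :
    Measurable (wideEval θ L : (Fin d → ℝ) → ℝ) :=
  (measurable_wideLayer _ _ L 0).comp (measurable_padInput _)

lemma abs_wideEval_sub_le {m L : ℕ} (hL : L ≤ m) {θ θ' : WideIndex (m + 1) → ℝ} {B δ : ℝ}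
    (hB : 1 ≤ B) (hδ : 0 ≤ δ) (hθ : ∀ p, |θ p| ≤ B) (hθ' : ∀ p, |θ' p| ≤ B)
    (hθθ : ∀ p, |θ p - θ' p| ≤ δ) {x : Fin d → ℝ} (hx : x ∈ cube d) :
    |wideEval θ L x - wideEval θ' L x| ≤ δ * (4 * (m + 1) * B) ^ (m + 1) := by
  have hbase : 1 ≤ 4 * ((m : ℝ) + 1) * B := by nlinarith [Nat.cast_nonneg (α := ℝ) m]
  refine (abs_wideLayer_sub_le hB hδ (abs_padInput_le hx) (fun _ _ _ => hθ _) (fun _ _ => hθ _)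
    (fun _ _ _ => hθ' _) (fun _ _ _ => hθθ _) (fun _ _ => hθθ _) L 0).trans ?_
  rw [Fintype.card_fin, Nat.cast_add_one]
  exact mul_le_mul_of_nonneg_left (pow_le_pow_right₀ hbase (by omega)) hδ

/-- The parameters of `net` extended by zero to `w` layers of `w` neurons, and clipped to
`[-B, B]` because nothing is assumed about the parameters of `net` beyond its depth. -/
def ReLUNet.wideParam (net : ReLUNet d) (w : ℕ) (B : ℝ) : WideIndex w → ℝ
  | (i, some j, k) =>
    if h : j.1 < net.width (i + 1) ∧ k.1 < net.width i then trunc B (net.W i ⟨j, h.1⟩ ⟨k, h.2⟩)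
    else 0
  | (i, none, k) => if h : k.1 < net.width i then trunc B (net.v i ⟨k, h⟩) else 0

lemma ReLUNet.abs_wideParam_le (net : ReLUNet d) (w : ℕ) {B : ℝ} (hB : 0 ≤ B)
    (p : WideIndex w) : |net.wideParam w B p| ≤ B := by
  rcases p with ⟨i, _ | j, k⟩ <;> simp only [wideParam] <;> split_ifs
  all_goals first | exact abs_trunc_le hB _ | simpa only [abs_zero] using hB

lemma ReLUNet.layer_eq_wideLayer (net : ReLUNet d) {w : ℕ}
    (hwidth : ∀ i ≤ net.L + 1, net.width i ≤ w) {W : ℕ → Fin w → Fin w → ℝ} {v : ℕ → Fin w → ℝ}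
    (hW : ∀ i (hi : i ≤ net.L) (j : Fin (net.width (i + 1))) k,
      W i (j.castLE (hwidth _ (by omega))) k =
        if h : k.1 < net.width i then net.W i j ⟨k, h⟩ else 0)
    (hv : ∀ i (hi : i < net.L) (k : Fin (net.width (i + 1))),
      v (i + 1) (k.castLE (hwidth _ (by omega))) = net.v (i + 1) k)
    {x : Fin (net.width 0) → ℝ} {y : Fin w → ℝ}
    (hy : ∀ k, y (k.castLE (hwidth 0 (by omega))) = x k) :
    ∀ i (hi : i ≤ net.L) (j : Fin (net.width (i + 1))),
      net.layer x i j = wideLayer W v y i (j.castLE (hwidth _ (by omega))) := by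
  have hsum : ∀ i (hi : i ≤ net.L) (j : Fin (net.width (i + 1))) (a : Fin (net.width i) → ℝ)
      (a' : Fin w → ℝ), (∀ k, a' (k.castLE (hwidth i (by omega))) = a k) →
      ∑ k, net.W i j k * a k = ∑ k, W i (j.castLE (hwidth _ (by omega))) k * a' k := by
    intro i hi j a a' ha
    refine Fintype.sum_of_injective (Fin.castLE (hwidth i (by omega)))
      (Fin.castLE_injective _) _ _ (fun k hk => ?_) fun k => ?_
    · rw [hW i hi, dif_neg, zero_mul]
      exact fun h => hk ⟨⟨k, h⟩, rfl⟩
    · rw [hW i hi, ha, dif_pos (by simp)]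
      rfl
  intro i hi
  induction i with
  | zero => exact fun j => hsum 0 hi j x y hy
  | succ i ih =>
    exact fun j => hsum (i + 1) hi j _ _ fun k => by rw [ih (by omega), hv i (by omega)]

lemma ReLUNet.eval_eq_wideEval (net : ReLUNet d) {m : ℕ} {B : ℝ} (hL : net.L ≤ m)
    (hwidth : ∀ i ≤ net.L + 1, net.width i ≤ m + 1)
    (hW : ∀ i ≤ net.L, ∀ j k, |net.W i j k| ≤ B)
    (hv : ∀ i, 1 ≤ i → i ≤ net.L → ∀ j, |net.v i j| ≤ B) (x : Fin d → ℝ) :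
    net.eval x = wideEval (net.wideParam (m + 1) B) net.L x := by
  have hofNat : ∀ i (hi : i ≤ net.L), Fin.ofNat (m + 1) i = ⟨i, by omega⟩ := fun i hi =>
    Fin.ext (Nat.mod_eq_of_lt (by omega))
  refine net.layer_eq_wideLayer hwidth (fun i hi j k => ?_) (fun i hi k => ?_) (fun k => ?_)
    net.L le_rfl _
  · rw [hofNat i hi]
    by_cases hk : k.1 < net.width i
    · rw [dif_pos hk]
      exact (dif_pos ⟨j.2, hk⟩).trans (trunc_of_abs_le (hW i hi _ _))
    · rw [dif_neg hk]
      exact dif_neg fun h => hk h.2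
  · rw [hofNat (i + 1) hi]
    exact (dif_pos k.2).trans (trunc_of_abs_le (hv _ (by omega) hi _))
  · exact dif_pos (k.2.trans_eq net.h0)

end Embedding

lemma exists_finset_grid {B δ : ℝ} (hB : 0 ≤ B) (hδ : 0 < δ) :
    ∃ s : Finset ℝ, s.card ≤ 2 * ⌈B / δ⌉₊ + 1 ∧ (∀ a ∈ s, |a| ≤ B) ∧
      ∀ a, |a| ≤ B → ∃ a' ∈ s, |a - a'| ≤ δ := by
  refine ⟨(Finset.Icc (-⌈B / δ⌉₊ : ℤ) ⌈B / δ⌉₊).image fun j : ℤ => trunc B (δ * j), ?_, ?_, ?_⟩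
  · refine Finset.card_image_le.trans ?_
    rw [Int.card_Icc]
    omega
  · simp only [Finset.mem_image]
    rintro _ ⟨j, -, rfl⟩
    exact abs_trunc_le hB _
  · intro a ha
    have hceil := Nat.le_ceil (B / δ)
    have hlow : -(⌈B / δ⌉₊ : ℝ) ≤ a / δ := by
      have := div_le_div_of_nonneg_right (abs_le.1 ha).1 hδ.le
      rw [neg_div] at this
      linarith
    have hupp : a / δ ≤ ⌈B / δ⌉₊ :=
      (div_le_div_of_nonneg_right (abs_le.1 ha).2 hδ.le).trans hceil
    refine ⟨_, Finset.mem_image_of_mem _ (Finset.mem_Icc.2 ⟨Int.le_floor.2 ?_,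
      Int.floor_le_iff.2 ?_⟩ : ⌊a / δ⌋ ∈ _), ?_⟩
    · exact_mod_cast hlow
    · push_cast
      linarith
    · rw [← trunc_of_abs_le ha]
      refine (abs_trunc_sub_trunc_le _ _ _).trans ?_
      rw [trunc_of_abs_le ha]
      have floor_mul_le := (le_div_iff₀ hδ).1 (Int.floor_le (a / δ))
      have lt_floor_add_one_mul := (div_lt_iff₀ hδ).1 (Int.lt_floor_add_one (a / δ))
      exact abs_le.2 ⟨by linarith, by linarith⟩

lemma exists_finset_pi_grid (κ : Type*) [Fintype κ] {B δ : ℝ} (hB : 0 ≤ B) (hδ : 0 < δ) :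
    ∃ s : Finset (κ → ℝ), s.card ≤ (2 * ⌈B / δ⌉₊ + 1) ^ Fintype.card κ ∧
      (∀ θ ∈ s, ∀ p, |θ p| ≤ B) ∧
      ∀ θ : κ → ℝ, (∀ p, |θ p| ≤ B) → ∃ θ' ∈ s, ∀ p, |θ p - θ' p| ≤ δ := by
  classical
  obtain ⟨s, hcard, hbound, hclose⟩ := exists_finset_grid hB hδ
  refine ⟨Fintype.piFinset fun _ => s, ?_, fun θ hθ p => hbound _ (Fintype.mem_piFinset.1 hθ p),
    fun θ hθ => ?_⟩
  · rw [Fintype.card_piFinset, Finset.prod_const, Finset.card_univ]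
    exact Nat.pow_le_pow_left hcard _
  · choose θ' hmem hθ' using fun p => hclose (θ p) (hθ p)
    exact ⟨θ', Fintype.mem_piFinset.2 hmem, hθ'⟩

lemma monotone_log_natCast : Monotone fun n : ℕ => Real.log n := by
  intro m n hmn
  rcases m.eq_zero_or_pos with rfl | hm
  · simpa only [Nat.cast_zero, Real.log_zero] using Real.log_natCast_nonneg n
  · exact Real.log_le_log (by exact_mod_cast hm) (by exact_mod_cast hmn)

lemma FNN.exists_finset_cover (d m : ℕ) {G N B ε : ℝ} (hG : G ≤ m) (hN : N ≤ m)
    (hB : 1 ≤ B) (hε : 0 < ε) (S Fb : ℝ≥0∞) :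
    ∃ T : Finset ((Fin d → ℝ) → ℝ), (∀ c ∈ T, Measurable c) ∧
      T.card ≤ (m + 1) * (2 * ⌈B * (4 * (m + 1) * B) ^ (m + 1) / ε⌉₊ + 1) ^
        Fintype.card (WideIndex (m + 1)) ∧
      ∀ f ∈ FNN d G N S B Fb, ∃ c ∈ T, ∀ x ∈ cube d, |f x - c x| ≤ ε := by
  classical
  have hR : 0 < (4 * ((m : ℝ) + 1) * B) ^ (m + 1) := by positivity
  obtain ⟨s, hcard, hbound, hclose⟩ := exists_finset_pi_grid (WideIndex (m + 1))
    (zero_le_one.trans hB) (div_pos hε hR)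
  rw [div_div_eq_mul_div] at hcard
  refine ⟨(Finset.range (m + 1) ×ˢ s).image fun p => wideEval p.2 p.1, ?_, ?_, ?_⟩
  · simp only [Finset.mem_image]
    rintro _ ⟨p, -, rfl⟩
    exact measurable_wideEval p.2 p.1
  · refine Finset.card_image_le.trans ?_
    rw [Finset.card_product, Finset.card_range]
    exact Nat.mul_le_mul_left _ hcard
  · rintro f ⟨net, hf, hL, hwidth, -, hW, hv, -⟩
    have hLm : net.L ≤ m := by exact_mod_cast hL.trans hG
    have hwm : ∀ i ≤ net.L + 1, net.width i ≤ m + 1 := fun i hi =>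
      Nat.le_succ_of_le (by exact_mod_cast (hwidth i hi).trans hN)
    have hθ := net.abs_wideParam_le (m + 1) (zero_le_one.trans hB)
    obtain ⟨θ', hθ's, hθθ'⟩ := hclose _ hθ
    refine ⟨_, Finset.mem_image_of_mem _ (Finset.mk_mem_product
      (Finset.mem_range.2 (Nat.lt_succ_iff.2 hLm)) hθ's), fun x hx => ?_⟩
    rw [hf, net.eval_eq_wideEval hLm hwm hW hv]
    refine (abs_wideEval_sub_le hLm hB (div_pos hε hR).le hθ (hbound θ' hθ's) hθθ' hx).trans_eq ?_
    exact div_mul_cancel₀ _ hR.ne'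

lemma log_two_mul_ceil_add_one_le {x : ℝ} (hx : 1 ≤ x) :
    Real.log ((2 * ⌈x⌉₊ + 1 : ℕ) : ℝ) ≤ Real.log 5 + Real.log x := by
  rw [← Real.log_mul (by norm_num) (by positivity)]
  refine Real.log_le_log (by positivity) ?_
  push_cast
  linarith [Nat.ceil_lt_add_one (zero_le_one.trans hx)]

lemma log_cover_card_le {m p n : ℕ} {b ν B : ℝ} (hn : 1 ≤ n) (hB : 1 ≤ B) (hb : 0 < b)
    (hBn : B ≤ b * (n : ℝ) ^ ν) :
    Real.log (((m + 1) * (2 * ⌈B * (4 * (m + 1) * B) ^ (m + 1) / (1 / n)⌉₊ + 1) ^ p : ℕ) : ℝ) ≤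
      Real.log (m + 1) + p * (Real.log 5 + (m + 1) * Real.log (4 * (m + 1)) +
        (m + 2) * Real.log b) + p * ((m + 2) * ν + 1) * Real.log n := by
  have hn' : (1 : ℝ) ≤ n := by exact_mod_cast hn
  have hB0 : B ≠ 0 := by positivity
  have hm : (4 * ((m : ℝ) + 1)) ≠ 0 := by positivity
  have hpow : 1 ≤ (4 * ((m : ℝ) + 1) * B) ^ (m + 1) :=
    one_le_pow₀ (by nlinarith [Nat.cast_nonneg (α := ℝ) m])
  have hx : 1 ≤ B * (4 * (m + 1) * B) ^ (m + 1) / (1 / n) := by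
    rw [div_div_eq_mul_div, div_one]
    exact one_le_mul_of_one_le_of_one_le (one_le_mul_of_one_le_of_one_le hB hpow) hn'
  have hlogB : Real.log B ≤ Real.log b + ν * Real.log n := by
    rw [← Real.log_rpow (by positivity), ← Real.log_mul hb.ne' (by positivity)]
    exact Real.log_le_log (by positivity) hBn
  have hlogx : Real.log (B * (4 * (m + 1) * B) ^ (m + 1) / (1 / n)) =
      (m + 1) * Real.log (4 * (m + 1)) + (m + 2) * Real.log B + Real.log n := by
    rw [div_div_eq_mul_div, div_one, Real.log_mul (by positivity) (by positivity),
      Real.log_mul hB0 (by positivity), Real.log_pow, Real.log_mul hm hB0]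
    push_cast
    ring
  have hceil := log_two_mul_ceil_add_one_le hx
  rw [Nat.cast_mul, Nat.cast_pow, Real.log_mul (by positivity) (by positivity), Real.log_pow,
    Nat.cast_add_one]
  calc _ ≤ Real.log (m + 1) + p * (Real.log 5 + ((m + 1) * Real.log (4 * (m + 1)) +
        (m + 2) * (Real.log b + ν * Real.log n) + Real.log n)) := by
        gcongr
        refine hceil.trans ?_
        rw [hlogx]
        gcongr
    _ = _ := by ring

lemma FNN.exists_finset_cover_log_card_le {b ν : ℝ} (hb : 1 ≤ b) (hν : 0 ≤ ν) :
    ∃ C, 0 ≤ C ∧ ∀ (d n : ℕ) (G N B : ℝ) (S Fb : ℝ≥0∞), 2 ≤ n → G ≤ b → N ≤ b → 1 ≤ B →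
      B ≤ b * (n : ℝ) ^ ν → ∃ T : Finset ((Fin d → ℝ) → ℝ), (∀ c ∈ T, Measurable c) ∧
        Real.log T.card ≤ C * Real.log n ∧
        ∀ f ∈ FNN d G N S B Fb, ∃ c ∈ T, ∀ x ∈ cube d, |f x - c x| ≤ 1 / n := by
  set m := ⌈b⌉₊
  set p := Fintype.card (WideIndex (m + 1))
  set A₀ := Real.log (m + 1) + p * (Real.log 5 + (m + 1) * Real.log (4 * (m + 1)) +
    (m + 2) * Real.log b)
  set A₁ := p * ((m + 2) * ν + 1)
  have hA₀ : 0 ≤ A₀ := by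
    have log_succ_nonneg : 0 ≤ Real.log ((m : ℝ) + 1) := Real.log_nonneg (by simp)
    have log_four_mul_nonneg : 0 ≤ Real.log (4 * ((m : ℝ) + 1)) := Real.log_nonneg (by
      linarith [Nat.cast_nonneg (α := ℝ) m])
    have log_b_nonneg : 0 ≤ Real.log b := Real.log_nonneg hb
    positivity
  have hlog2 : 0 < Real.log 2 := Real.log_pos one_lt_two
  refine ⟨A₀ / Real.log 2 + A₁, by positivity, fun d n G N B S Fb hn hG hN hB hBn => ?_⟩
  have hn0 : (0 : ℝ) < 1 / n := by positivity
  obtain ⟨T, hmeas, hcard, hcover⟩ := exists_finset_cover d m (hG.trans (Nat.le_ceil b))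
    (hN.trans (Nat.le_ceil b)) hB hn0 S Fb
  refine ⟨T, hmeas, ?_, hcover⟩
  have hlogn : Real.log 2 ≤ Real.log n := Real.log_le_log two_pos (by exact_mod_cast hn)
  calc Real.log T.card
      ≤ Real.log (((m + 1) * (2 * ⌈B * (4 * (m + 1) * B) ^ (m + 1) / (1 / n)⌉₊ + 1) ^ p : ℕ) : ℝ) :=
        monotone_log_natCast hcard
    _ ≤ A₀ + A₁ * Real.log n := log_cover_card_le (by omega) hB (by linarith) hBn
    _ ≤ A₀ / Real.log 2 * Real.log n + A₁ * Real.log n := by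
        gcongr
        rw [div_mul_eq_mul_div, le_div_iff₀ hlog2]
        gcongr
    _ = (A₀ / Real.log 2 + A₁) * Real.log n := by ring

/-! ### Uniform families of sparse networks -/

/-- A ReLU network on `[0,1]^d` whose hidden layers all have the same set `ι` of neurons, with
parameters in `[-1, 1]`; each neuron of the first layer reads a single coordinate, so that the
number of nonzero parameters does not depend on `d`. The layers are indexed by all of `ℕ`, and
the depth is fixed only when the network is evaluated. -/
structure SparseNet (d : ℕ) (ι : Type) where
  input : ι → Fin d
  scale : ι → ℝ
  W : ℕ → ι → ι → ℝ
  v : ℕ → ι → ℝ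
  abs_scale_le : ∀ j, |scale j| ≤ 1
  abs_W_le : ∀ i j l, |W i j l| ≤ 1
  abs_v_le : ∀ i j, |v i j| ≤ 1

namespace SparseNet

variable {d : ℕ} {ι κ : Type} [Fintype ι] [Fintype κ]

/-- The activated values of the neurons of the `i`-th hidden layer. -/
def hidden (θ : SparseNet d ι) (x : Fin d → ℝ) : ℕ → ι → ℝ
  | 0 => fun j => max 0 (θ.scale j * x (θ.input j) - θ.v 0 j)
  | i + 1 => fun j => max 0 (∑ l, θ.W i j l * hidden θ x i l - θ.v (i + 1) j)

/-- Two networks side by side, without connections between them. -/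
def sum (θ : SparseNet d ι) (θ' : SparseNet d κ) : SparseNet d (ι ⊕ κ) where
  input := Sum.elim θ.input θ'.input
  scale := Sum.elim θ.scale θ'.scale
  W i := Sum.elim (fun j => Sum.elim (θ.W i j) 0) fun j => Sum.elim 0 (θ'.W i j)
  v i := Sum.elim (θ.v i) (θ'.v i)
  abs_scale_le := Sum.rec θ.abs_scale_le θ'.abs_scale_le
  abs_W_le i := by
    rintro (j | j) (l | l)
    exacts [θ.abs_W_le i j l, abs_zero.trans_le zero_le_one, abs_zero.trans_le zero_le_one,
      θ'.abs_W_le i j l]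
  abs_v_le i := Sum.rec (θ.abs_v_le i) (θ'.abs_v_le i)

lemma hidden_sum (θ : SparseNet d ι) (θ' : SparseNet d κ) (x : Fin d → ℝ) :
    ∀ i, (θ.sum θ').hidden x i = Sum.elim (θ.hidden x i) (θ'.hidden x i)
  | 0 => by ext (j | j) <;> rfl
  | i + 1 => by
    ext (j | j) <;> simp only [hidden, hidden_sum θ θ' x i] <;> simp [sum]

/-- The network `θ` with the hidden layer `L + 1` replaced by copies of `ReLU (∑ l, a l * y l)`,
where `y` is the hidden layer `L`. -/
def snocRelu (θ : SparseNet d ι) (L : ℕ) (a : ι → ℝ) (ha : ∀ j, |a j| ≤ 1) : SparseNet d ι where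
  input := θ.input
  scale := θ.scale
  W i j := if i = L then a else θ.W i j
  v i j := if i = L + 1 then 0 else θ.v i j
  abs_scale_le := θ.abs_scale_le
  abs_W_le i j l := by
    split_ifs
    exacts [ha l, θ.abs_W_le i j l]
  abs_v_le i j := by
    split_ifs
    exacts [abs_zero.trans_le zero_le_one, θ.abs_v_le i j]

variable (θ : SparseNet d ι) (L : ℕ) (a : ι → ℝ) (x : Fin d → ℝ)

lemma hidden_snocRelu_of_le (ha : ∀ j, |a j| ≤ 1) :
    ∀ i ≤ L, (θ.snocRelu L a ha).hidden x i = θ.hidden x i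
  | 0, _ => by simp [hidden, snocRelu]
  | i + 1, hi => by
    ext j
    simp only [hidden, hidden_snocRelu_of_le ha i (by omega)]
    simp [snocRelu, show i ≠ L by omega]

lemma hidden_snocRelu (ha : ∀ j, |a j| ≤ 1) (j : ι) :
    (θ.snocRelu L a ha).hidden x (L + 1) j = max 0 (∑ l, a l * θ.hidden x L l) := by
  simp only [hidden, θ.hidden_snocRelu_of_le L a x ha L le_rfl]
  simp [snocRelu]

/-- The neuron `l` of a layer with neuron set `ι`, numbered as in `Fintype.equivFin`; the numbers
from `Fintype.card ι` on are junk. -/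
def neuron (ι : Type) [Fintype ι] [Nonempty ι] : ℕ → ι :=
  Function.extend Fin.val (Fintype.equivFin ι).symm fun _ => Classical.arbitrary ι

lemma sum_neuron [Nonempty ι] {m : ℕ} (hm : m = Fintype.card ι) (F : ι → ℝ) :
    ∑ k : Fin m, F (neuron ι k) = ∑ l, F l := by
  subst hm
  rw [← (Fintype.equivFin ι).symm.sum_comp]
  simp only [neuron, Fin.val_injective.extend_apply]

/-- The width vector of `SparseNet.toReLUNet`: the input layer, `L + 1` hidden layers with `c`
neurons each, and the output layer. -/
def layerWidth (d c L : ℕ) : ℕ → ℕ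
  | 0 => d
  | i + 1 => if i = L + 1 then 1 else c

/-- The `ReLUNet` computing `∑ j, a j * y j`, where `y` is the hidden layer `L` of `θ`. -/
def toReLUNet [Nonempty ι] : ReLUNet d where
  L := L + 1
  width := layerWidth d (Fintype.card ι) L
  W
    | 0, j, k => if (k : ℕ) = θ.input (neuron ι j) then θ.scale (neuron ι j) else 0
    | i + 1, j, k => if i = L then a (neuron ι k) else θ.W i (neuron ι j) (neuron ι k)
  v i j := θ.v (i - 1) (neuron ι j)
  h0 := rfl
  hL := if_pos rfl

lemma relu_layer_toReLUNet [Nonempty ι] : ∀ i ≤ L, ∀ j,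
    max 0 ((θ.toReLUNet L a).layer x i j - (θ.toReLUNet L a).v (i + 1) j) =
      θ.hidden x i (neuron ι j)
  | 0, _, j => by
    congr 2
    exact (Fintype.sum_eq_single (θ.input (neuron ι j)) fun k hk => by
      simp [toReLUNet, Fin.val_ne_of_ne hk]).trans (by simp [toReLUNet])
  | i + 1, hi, j => by
    simp only [ReLUNet.layer, relu_layer_toReLUNet i (by omega), hidden]
    congr 2
    simp only [toReLUNet, if_neg (show i ≠ L by omega)]
    exact sum_neuron (if_neg (by omega)) fun l => θ.W i (neuron ι j) l * θ.hidden x i l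

lemma eval_toReLUNet [Nonempty ι] : (θ.toReLUNet L a).eval x = ∑ j, a j * θ.hidden x L j := by
  have output_eq (j) : (θ.toReLUNet L a).layer x (L + 1) j = ∑ j, a j * θ.hidden x L j := by
    simp only [ReLUNet.layer, relu_layer_toReLUNet θ L a x L le_rfl]
    simp only [toReLUNet, if_true]
    exact sum_neuron (if_neg (by omega)) fun l => a l * θ.hidden x L l
  exact output_eq _

lemma width_toReLUNet_succ_le [Nonempty ι] (i : ℕ) :
    (θ.toReLUNet L a).width (i + 1) ≤ Fintype.card ι := by
  simp only [toReLUNet, layerWidth]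
  split_ifs
  exacts [Fintype.card_pos, le_rfl]

lemma card_W_toReLUNet_le [Nonempty ι] : ∀ i,
    Nat.card {p : Fin ((θ.toReLUNet L a).width (i + 1)) × Fin ((θ.toReLUNet L a).width i) //
      (θ.toReLUNet L a).W i p.1 p.2 ≠ 0} ≤ Fintype.card ι * Fintype.card ι
  | 0 => by
    have input_eq {p : Fin _ × Fin _} (hp : (θ.toReLUNet L a).W 0 p.1 p.2 ≠ 0) :
        (p.2 : ℕ) = θ.input (neuron ι p.1) := not_imp_comm.1 (fun h => if_neg h) hp
    refine (Nat.card_le_card_of_injective (fun p => p.1.1) fun p p' h => ?_).trans ?_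
    · refine Subtype.ext (Prod.ext h (Fin.ext ?_))
      rw [input_eq p.2, input_eq p'.2]
      exact congrArg (fun j : Fin _ => (θ.input (neuron ι j) : ℕ)) h
    · rw [Nat.card_fin]
      exact (θ.width_toReLUNet_succ_le L a 0).trans (Nat.le_mul_self _)
  | i + 1 => by
    refine (Nat.card_le_card_of_injective _ Subtype.val_injective).trans ?_
    rw [Nat.card_prod, Nat.card_fin, Nat.card_fin]
    exact Nat.mul_le_mul (θ.width_toReLUNet_succ_le L a _) (θ.width_toReLUNet_succ_le L a _)

lemma card_v_toReLUNet_le [Nonempty ι] (i : ℕ) :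
    Nat.card {j : Fin ((θ.toReLUNet L a).width (i + 1)) // (θ.toReLUNet L a).v (i + 1) j ≠ 0} ≤
      Fintype.card ι :=
  (Nat.card_le_card_of_injective _ Subtype.val_injective).trans
    ((Nat.card_fin _).trans_le (θ.width_toReLUNet_succ_le L a i))

lemma abs_W_toReLUNet_le [Nonempty ι] (ha : ∀ j, |a j| ≤ 1) :
    ∀ i j k, |(θ.toReLUNet L a).W i j k| ≤ 1
  | 0, j, k => by
    simp only [toReLUNet]
    split_ifs
    exacts [θ.abs_scale_le _, abs_zero.trans_le zero_le_one]
  | i + 1, j, k => by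
    simp only [toReLUNet]
    split_ifs
    exacts [ha _, θ.abs_W_le i _ _]

lemma eval_toReLUNet_mem_FNN [Nonempty ι] (ha : ∀ j, |a j| ≤ 1) {w : ℕ}
    (hw : Fintype.card ι ≤ w) {G N B : ℝ} {S : ℝ≥0∞} (hG : (L + 1 : ℕ) ≤ G)
    (hN : w ≤ N) (hd : d ≤ N) (hB : 1 ≤ B)
    (hS : ((L + 2) * (w * w) + (L + 1) * w : ℕ) ≤ S) :
    (θ.toReLUNet L a).eval ∈ FNN d G N S B ∞ := by
  refine ⟨θ.toReLUNet L a, fun _ => rfl, hG, ?_, ?_,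
    fun i _ j k => (θ.abs_W_toReLUNet_le L a ha i j k).trans hB,
    fun i _ _ j => (θ.abs_v_le _ _).trans hB, fun _ _ => le_top⟩
  · rintro (_ | i) _
    · exact hd
    · exact (Nat.cast_le.2 ((θ.width_toReLUNet_succ_le L a i).trans hw)).trans hN
  · refine le_trans ?_ hS
    have card_W_le := Finset.sum_le_card_nsmul (Finset.range (L + 2)) _ _ fun i _ =>
      (θ.card_W_toReLUNet_le L a i).trans (Nat.mul_le_mul hw hw)
    have card_v_le := Finset.sum_le_card_nsmul (Finset.range (L + 1)) _ _ fun i _ =>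
      (θ.card_v_toReLUNet_le L a i).trans hw
    rw [Finset.card_range, smul_eq_mul] at card_W_le card_v_le
    exact_mod_cast add_le_add card_W_le card_v_le

end SparseNet

/-- `f` agrees on the cube with a linear combination of the neurons in the hidden layer `L` of a
`SparseNet` of width at most `w`. -/
def NetFun (d L w : ℕ) (f : (Fin d → ℝ) → ℝ) : Prop :=
  ∃ (ι : Type) (_ : Fintype ι) (_ : Nonempty ι) (θ : SparseNet d ι) (a : ι → ℝ),
    Fintype.card ι ≤ w ∧ (∀ j, |a j| ≤ 1) ∧ ∀ x ∈ cube d, f x = ∑ j, a j * θ.hidden x L j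

namespace NetFun

variable {d L w w' : ℕ} {f g : (Fin d → ℝ) → ℝ}

lemma congr (hf : NetFun d L w f) (h : ∀ x ∈ cube d, g x = f x) : NetFun d L w g := by
  obtain ⟨ι, _, _, θ, a, hw, ha, hfa⟩ := hf
  exact ⟨ι, _, ‹_›, θ, a, hw, ha, fun x hx => (h x hx).trans (hfa x hx)⟩

lemma mono (hf : NetFun d L w f) (hw : w ≤ w') : NetFun d L w' f := by
  obtain ⟨ι, _, _, θ, a, hιw, ha, hfa⟩ := hf
  exact ⟨ι, _, ‹_›, θ, a, hιw.trans hw, ha, hfa⟩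

protected lemma add (hf : NetFun d L w f) (hg : NetFun d L w' g) :
    NetFun d L (w + w') fun x => f x + g x := by
  obtain ⟨ι, _, _, θ, a, hw, ha, hfa⟩ := hf
  obtain ⟨κ, _, _, θ', a', hw', ha', hga⟩ := hg
  refine ⟨ι ⊕ κ, inferInstance, inferInstance, θ.sum θ', Sum.elim a a',
    by simpa only [Fintype.card_sum] using add_le_add hw hw', Sum.rec ha ha', fun x hx => ?_⟩
  simp only [hfa x hx, hga x hx, SparseNet.hidden_sum, Fintype.sum_sum_type, Sum.elim_inl,
    Sum.elim_inr]

protected lemma neg (hf : NetFun d L w f) : NetFun d L w fun x => -f x := by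
  obtain ⟨ι, _, _, θ, a, hw, ha, hfa⟩ := hf
  refine ⟨ι, _, ‹_›, θ, -a, hw, fun j => (abs_neg (a j)).trans_le (ha j), fun x hx => ?_⟩
  simp only [hfa x hx, Pi.neg_apply, neg_mul, Finset.sum_neg_distrib]

lemma relu (hf : NetFun d L w f) : NetFun d (L + 1) w fun x => max 0 (f x) := by
  classical
  obtain ⟨ι, _, ⟨j₀⟩, θ, a, hw, ha, hfa⟩ := hf
  refine ⟨ι, _, ⟨j₀⟩, θ.snocRelu L a ha, Pi.single j₀ 1, hw, fun j => ?_, fun x hx => ?_⟩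
  · rcases eq_or_ne j j₀ with rfl | hj
    · rw [Pi.single_eq_same, abs_one]
    · rw [Pi.single_eq_of_ne hj, abs_zero]
      exact zero_le_one
  · simp only [hfa x hx, SparseNet.hidden_snocRelu, ← Finset.sum_mul,
      Finset.sum_pi_single' j₀ (1 : ℝ), Finset.mem_univ, if_true, one_mul]

lemma succ_depth (hf : NetFun d L w f) : NetFun d (L + 1) (w + w) f :=
  (hf.relu.add hf.neg.relu.neg).congr fun x _ => by
    rw [← sub_eq_add_neg, max_comm, max_comm 0 (-f x), max_zero_sub_max_neg_zero_eq_self]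

lemma le_depth {L' : ℕ} (hL : L ≤ L') (w : ℕ) :
    ∃ w', ∀ (d : ℕ) (f : (Fin d → ℝ) → ℝ), NetFun d L w f → NetFun d L' w' f := by
  induction L', hL using Nat.le_induction with
  | base => exact ⟨w, fun _ _ hf => hf⟩
  | succ L' _ ih =>
    obtain ⟨w', hw'⟩ := ih
    exact ⟨w' + w', fun d f hf => (hw' d f hf).succ_depth⟩

lemma const (k : Fin d) {c : ℝ} (hc : |c| ≤ 1) : NetFun d 0 1 fun _ => c := by
  refine ⟨Unit, inferInstance, inferInstance,
    ⟨fun _ => k, 0, 0, fun _ _ => -1, ?_, ?_, ?_⟩, fun _ => c, ?_, fun _ => hc, ?_⟩ <;>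
  simp [SparseNet.hidden]

lemma coord (k : Fin d) : NetFun d 0 1 fun x => x k := by
  refine ⟨Unit, inferInstance, inferInstance,
    ⟨fun _ => k, 1, 0, 0, ?_, ?_, ?_⟩, fun _ => 1, ?_, ?_, fun x hx => ?_⟩
  case refine_6 => simp [SparseNet.hidden, (hx k (mem_univ k)).1]
  all_goals simp

end NetFun

/-- A family of functions, on cubes of possibly different dimensions, whose members are all
computed by sparse networks of the same depth and width. -/
def UniformNet {I : Type} {d : I → ℕ} (F : ∀ i, (Fin (d i) → ℝ) → ℝ) : Prop :=
  ∃ L w : ℕ, ∀ i, NetFun (d i) L w (F i)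

namespace UniformNet

variable {I J κ : Type} {d : I → ℕ} {F G : ∀ i, (Fin (d i) → ℝ) → ℝ}

lemma congr (hF : UniformNet F) (h : ∀ i, ∀ x ∈ cube (d i), G i x = F i x) : UniformNet G :=
  let ⟨L, w, hF⟩ := hF
  ⟨L, w, fun i => (hF i).congr (h i)⟩

lemma comp (hF : UniformNet F) (φ : J → I) :
    UniformNet (d := fun j => d (φ j)) fun j => F (φ j) :=
  let ⟨L, w, hF⟩ := hF
  ⟨L, w, fun j => hF (φ j)⟩

protected lemma neg (hF : UniformNet F) : UniformNet fun i x => -F i x :=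
  let ⟨L, w, hF⟩ := hF
  ⟨L, w, fun i => (hF i).neg⟩

protected lemma add (hF : UniformNet F) (hG : UniformNet G) :
    UniformNet fun i x => F i x + G i x := by
  obtain ⟨L, w, hF⟩ := hF
  obtain ⟨L', w', hG⟩ := hG
  obtain ⟨v, hv⟩ := NetFun.le_depth (le_max_left L L') w
  obtain ⟨v', hv'⟩ := NetFun.le_depth (le_max_right L L') w'
  exact ⟨_, _, fun i => (hv _ _ (hF i)).add (hv' _ _ (hG i))⟩

protected lemma sub (hF : UniformNet F) (hG : UniformNet G) :
    UniformNet fun i x => F i x - G i x :=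
  (hF.add hG.neg).congr fun _ _ _ => sub_eq_add_neg _ _

lemma relu (hF : UniformNet F) : UniformNet fun i x => max 0 (F i x) :=
  let ⟨L, w, hF⟩ := hF
  ⟨L + 1, w, fun i => (hF i).relu⟩

protected lemma sup (hF : UniformNet F) (hG : UniformNet G) :
    UniformNet fun i x => max (F i x) (G i x) :=
  (hF.add (hG.sub hF).relu).congr fun i x _ => by
    rw [← max_add_add_left, add_zero, add_sub_cancel]

protected lemma abs (hF : UniformNet F) : UniformNet fun i x => |F i x| :=
  hF.sup hF.neg

lemma const (hd : ∀ i, 0 < d i) {c : I → ℝ} (hc : ∀ i, |c i| ≤ 1) :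
    UniformNet (d := d) fun i _ => c i :=
  ⟨0, 1, fun i => NetFun.const ⟨0, hd i⟩ (hc i)⟩

lemma coord (k : ∀ i, Fin (d i)) : UniformNet fun i x => x (k i) :=
  ⟨0, 1, fun i => NetFun.coord (k i)⟩

lemma zero (hd : ∀ i, 0 < d i) : UniformNet (d := d) fun _ _ => 0 :=
  const hd fun _ => abs_zero.trans_le zero_le_one

lemma one (hd : ∀ i, 0 < d i) : UniformNet (d := d) fun _ _ => 1 :=
  const hd fun _ => abs_one.le

protected lemma sum (hd : ∀ i, 0 < d i) (s : Finset κ) {F : κ → ∀ i, (Fin (d i) → ℝ) → ℝ}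
    (hF : ∀ k, UniformNet (F k)) : UniformNet fun i x => ∑ k ∈ s, F k i x := by
  classical
  induction s using Finset.induction_on with
  | empty => exact zero hd
  | insert k s hk ih => exact ((hF k).add ih).congr fun i x _ => Finset.sum_insert hk

lemma natCast_mul (hd : ∀ i, 0 < d i) (hF : UniformNet F) (n : ℕ) :
    UniformNet fun i x => n * F i x :=
  (UniformNet.sum hd (Finset.range n) fun _ => hF).congr fun _ _ _ => by
    rw [Finset.sum_const, Finset.card_range, nsmul_eq_mul]

lemma finset_sup' {s : Finset κ} (hs : s.Nonempty) {F : κ → ∀ i, (Fin (d i) → ℝ) → ℝ}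
    (hF : ∀ k ∈ s, UniformNet (F k)) : UniformNet fun i x => s.sup' hs fun k => F k i x := by
  induction hs using Finset.Nonempty.cons_induction with
  | singleton k => exact hF k (Finset.mem_singleton_self k)
  | cons k s hk hs ih =>
    exact ((hF k (Finset.mem_cons_self k s)).sup
      (ih fun l hl => hF l (Finset.mem_cons_of_mem hl))).congr fun i x _ => Finset.sup'_cons hs _

lemma trunc_one (hd : ∀ i, 0 < d i) (hF : UniformNet F) :
    UniformNet fun i x => trunc 1 (F i x) :=
  (((one hd).neg.sup hF).neg.sup (one hd).neg).neg.congr fun i x _ => by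
    rw [trunc, max_neg_neg, neg_neg, min_comm]

lemma exists_size (hF : UniformNet F) : ∃ c : ℕ, 0 < c ∧ ∀ (i : I) {G N B : ℝ} {S : ℝ≥0∞},
    c ≤ G → c ≤ N → d i ≤ N → 1 ≤ B → c ≤ S →
      ∃ f ∈ FNN (d i) G N S B ∞, ∀ x ∈ cube (d i), f x = F i x := by
  obtain ⟨L, w, hF⟩ := hF
  set s := (L + 2) * (w * w) + (L + 1) * w
  refine ⟨L + 1 + w + s, by omega, fun i G N B S hG hN hd hB hS => ?_⟩
  obtain ⟨ι, _, _, θ, a, hw, ha, hf⟩ := hF i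
  refine ⟨_, θ.eval_toReLUNet_mem_FNN L a ha hw (le_trans ?_ hG) (le_trans ?_ hN) hd hB
    (le_trans ?_ hS), fun x hx => (θ.eval_toReLUNet L a x).trans (hf x hx).symm⟩
  all_goals exact Nat.cast_le.2 (by omega)

end UniformNet

/-! ### Moduli of continuity of the building blocks -/

/-- `f` varies by at most `ε` between points of `s` at distance at most `δ`. -/
def ModulusOn {X : Type*} [PseudoMetricSpace X] (f : X → ℝ) (s : Set X) (δ ε : ℝ) : Prop :=
  ∀ x ∈ s, ∀ z ∈ s, dist x z ≤ δ → |f x - f z| ≤ ε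

/-- The contractions of `s` towards an interior point move `s` into its interior without
increasing distances. -/
lemma ModulusOn.of_interior {E : Type*} [NormedAddCommGroup E] [NormedSpace ℝ E] {f : E → ℝ}
    {s : Set E} {δ ε : ℝ} (hs : Convex ℝ s) (hint : (interior s).Nonempty)
    (hf : ContinuousOn f s) (h : ModulusOn f (interior s) δ ε) : ModulusOn f s δ ε := by
  intro x hx z hz hxz
  obtain ⟨c, hc⟩ := hint
  let p : E → ℝ → E := fun y t => y + t • (c - y)
  have hp_mem {y : E} (hy : y ∈ s) : ∀ᶠ t in nhdsWithin (0 : ℝ) (Ioo 0 1), p y t ∈ interior s :=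
    eventually_nhdsWithin_of_forall fun t ht =>
      hs.add_smul_sub_mem_interior hy hc (Ioo_subset_Ioc_self ht)
  have hf_lim {y : E} (hy : y ∈ s) :
      Filter.Tendsto (fun t => f (p y t)) (nhdsWithin 0 (Ioo 0 1)) (nhds (f y)) := by
    have hp_lim : Filter.Tendsto (p y) (nhds 0) (nhds y) :=
      (show Continuous (p y) by fun_prop).tendsto' 0 y (by simp only [p, zero_smul, add_zero])
    exact (hf y hy).tendsto.comp (tendsto_nhdsWithin_iff.2
      ⟨hp_lim.mono_left nhdsWithin_le_nhds, (hp_mem hy).mono fun t ht => interior_subset ht⟩)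
  have : (nhdsWithin (0 : ℝ) (Ioo 0 1)).NeBot := left_nhdsWithin_Ioo_neBot one_pos
  refine le_of_tendsto ((hf_lim hx).sub (hf_lim hz)).abs ?_
  filter_upwards [hp_mem hx, hp_mem hz, self_mem_nhdsWithin] with t htx htz ht
  refine h _ htx _ htz (le_trans ?_ hxz)
  have hsub : p x t - p z t = (1 - t) • (x - z) := by simp only [p]; module
  rw [dist_eq_norm, dist_eq_norm, hsub, norm_smul, Real.norm_of_nonneg (by linarith [ht.2])]
  exact mul_le_of_le_one_left (norm_nonneg _) (by linarith [ht.1])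

section Holder

variable {m : ℕ} {β r : ℝ} {f : (Fin m → ℝ) → ℝ} {x z : Fin m → ℝ}

lemma convex_cube (m : ℕ) : Convex ℝ (cube m) := convex_pi fun _ _ => convex_Icc 0 1

lemma interior_cube (m : ℕ) : interior (cube m) = cubeo m := by
  simp only [cube, cubeo, interior_pi_set finite_univ, interior_Icc]

lemma nonempty_cubeo (m : ℕ) : (cubeo m).Nonempty :=
  univ_pi_nonempty_iff.2 fun _ => nonempty_Ioo.2 one_pos

lemma e2_le_mul_dist (x z : Fin m → ℝ) : e2 x z ≤ m * dist x z := by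
  have sq_le (i : Fin m) : (x i - z i) ^ 2 ≤ dist x z ^ 2 :=
    sq_le_sq.2 ((dist_le_pi_dist x z i).trans (le_abs_self _))
  refine Real.sqrt_le_iff.2 ⟨by positivity, (Finset.sum_le_card_nsmul _ _ _ fun i _ =>
    sq_le i).trans ?_⟩
  rw [Finset.card_fin, nsmul_eq_mul, mul_pow]
  gcongr
  exact_mod_cast Nat.le_self_pow two_ne_zero m

lemma e2_pos (hxz : x ≠ z) : 0 < e2 x z := by
  obtain ⟨j, hj⟩ := Function.ne_iff.1 hxz
  exact Real.sqrt_pos.2 (Finset.sum_pos' (fun i _ => sq_nonneg _)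
    ⟨j, Finset.mem_univ _, sq_pos_of_ne_zero (sub_ne_zero.2 hj)⟩)

lemma Dm_zero (f : (Fin m → ℝ) → ℝ) : Dm 0 f = f := by
  have : idxList (0 : Fin m → ℕ) = [] := List.flatMap_eq_nil_iff.2 fun _ _ => rfl
  rw [Dm, this, pderivList]

lemma idxList_single (j : Fin m) : idxList (Pi.single j 1) = [j] := by
  have flatMap_eq (l : List (Fin m)) :
      (l.flatMap fun i => List.replicate ((Pi.single j 1 : Fin m → ℕ) i) i) =
        List.replicate (l.count j) j := by
    induction l with
    | nil => rfl
    | cons a l ih =>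
      rw [List.flatMap_cons, ih]
      rcases eq_or_ne a j with rfl | hne
      · simp [List.replicate_succ]
      · simp [hne]
  rw [idxList, flatMap_eq, List.count_eq_one_of_mem (List.nodup_finRange m) (List.mem_finRange j),
    List.replicate_one]

lemma Dm_single (j : Fin m) (f : (Fin m → ℝ) → ℝ) :
    Dm (Pi.single j 1) f = fun x => fderiv ℝ f x (Pi.single j 1) := by
  rw [Dm, idxList_single, pderivList, pderivList]

lemma norm_le_card_mul {A : (Fin m → ℝ) →L[ℝ] ℝ} (hr : 0 ≤ r)
    (hA : ∀ j, |A (Pi.single j 1)| ≤ r) : ‖A‖ ≤ m * r := by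
  refine A.opNorm_le_bound (by positivity) fun y => ?_
  calc ‖A y‖ = ‖∑ j, y j * A (Pi.single j 1)‖ := by
        conv_lhs => rw [pi_eq_sum_univ' y, map_sum]
        simp only [map_smul, smul_eq_mul]
    _ ≤ ∑ _j : Fin m, ‖y‖ * r := norm_sum_le_of_le _ fun j _ => by
        rw [norm_mul]
        exact mul_le_mul (norm_le_pi_norm y j) (hA j) (abs_nonneg _) (norm_nonneg _)
    _ = m * r * ‖y‖ := by
        rw [Finset.sum_const, Finset.card_fin, nsmul_eq_mul]
        ring

namespace HolderBall

lemma abs_Dm_le (hr : 0 ≤ r) (hf : f ∈ HolderBall m β r) {u : Fin m → ℕ} (hu : mord u < β)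
    (hx : x ∈ cubeo m) : |Dm u f x| ≤ r := by
  rw [← ENNReal.ofReal_le_ofReal_iff hr]
  refine le_trans ?_ (le_self_add.trans hf.2.2.2)
  exact le_iSup₂_of_le u hu
    (le_iSup₂_of_le (f := fun x _ => ENNReal.ofReal |Dm u f x|) x hx le_rfl)

lemma abs_sub_le_of_le_one (hβ : 0 < β) (hβ1 : β ≤ 1) (hr : 0 ≤ r) (hf : f ∈ HolderBall m β r)
    (hx : x ∈ cubeo m) (hz : z ∈ cubeo m) : |f x - f z| ≤ r * e2 x z ^ β := by
  rcases eq_or_ne x z with rfl | hne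
  · rw [sub_self, abs_zero]
    exact mul_nonneg hr (Real.rpow_nonneg (Real.sqrt_nonneg _) _)
  have hceil : ⌈β⌉ = 1 :=
    Int.ceil_eq_iff.2 ⟨by rwa [Int.cast_one, sub_self], by rwa [Int.cast_one]⟩
  have quotient_le : ENNReal.ofReal |Dm 0 f x - Dm 0 f z| /
      ENNReal.ofReal (e2 x z) ^ (β + 1 - (⌈β⌉ : ℝ)) ≤ ENNReal.ofReal r := by
    refine le_trans ?_ (le_add_self.trans hf.2.2.2)
    exact le_iSup₂_of_le (0 : Fin m → ℕ) (by simp [mord, hceil, hβ])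
      (le_iSup₂_of_le x hx (le_iSup₂_of_le z hz (le_iSup_of_le hne le_rfl)))
  have hpos : 0 < e2 x z ^ β := Real.rpow_pos_of_pos (e2_pos hne) _
  rwa [Dm_zero, hceil, Int.cast_one, add_sub_cancel_right, ENNReal.ofReal_rpow_of_pos (e2_pos hne),
    ← ENNReal.ofReal_div_of_pos hpos, ENNReal.ofReal_le_ofReal_iff hr, div_le_iff₀ hpos]
    at quotient_le

lemma abs_sub_le_of_one_lt (hβ : 1 < β) (hr : 0 ≤ r) (hf : f ∈ HolderBall m β r)
    (hx : x ∈ cubeo m) (hz : z ∈ cubeo m) : |f x - f z| ≤ m * r * dist x z := by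
  have hopen : IsOpen (cubeo m) := interior_cube m ▸ isOpen_interior
  have hconvex : Convex ℝ (cubeo m) := interior_cube m ▸ (convex_cube m).interior
  have hdiff (y) (hy : y ∈ cubeo m) : DifferentiableAt ℝ f y := by
    refine (hf.2.1.differentiableOn ?_).differentiableAt (hopen.mem_nhds hy)
    exact_mod_cast (Nat.ceil_pos.2 (sub_pos.2 hβ)).ne'
  have hpartial (y) (hy : y ∈ cubeo m) (j) : |fderiv ℝ f y (Pi.single j 1)| ≤ r := by
    have := abs_Dm_le hr hf (u := Pi.single j 1) (by simpa [mord] using hβ) hy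
    rwa [Dm_single] at this
  rw [dist_eq_norm]
  exact hconvex.norm_image_sub_le_of_norm_fderiv_le hdiff
    (fun y hy => norm_le_card_mul hr (hpartial y hy)) hz hx

lemma exists_modulusOn_cubeo (m : ℕ) (hβ : 0 < β) (hr : 0 < r) {ε : ℝ} (hε : 0 < ε) :
    ∃ δ > 0, ∀ f ∈ HolderBall m β r, ModulusOn f (cubeo m) δ ε := by
  rcases le_or_gt β 1 with hβ1 | hβ1
  · refine ⟨(ε / r) ^ β⁻¹ / (m + 1), by positivity, fun f hf x hx z hz hxz => ?_⟩
    have e2_le : e2 x z ≤ (ε / r) ^ β⁻¹ :=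
      calc e2 x z ≤ m * dist x z := e2_le_mul_dist x z
        _ ≤ (m + 1) * ((ε / r) ^ β⁻¹ / (m + 1)) := by gcongr; linarith
        _ = (ε / r) ^ β⁻¹ := by field_simp
    calc |f x - f z| ≤ r * e2 x z ^ β := abs_sub_le_of_le_one hβ hβ1 hr.le hf hx hz
      _ ≤ r * ((ε / r) ^ β⁻¹) ^ β := by
          gcongr
          exact Real.sqrt_nonneg _
      _ = ε := by
          rw [Real.rpow_inv_rpow (by positivity) hβ.ne']
          field_simp
  · refine ⟨ε / (r * (m + 1)), by positivity, fun f hf x hx z hz hxz => ?_⟩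
    calc |f x - f z| ≤ m * r * dist x z := abs_sub_le_of_one_lt hβ1 hr.le hf hx hz
      _ ≤ (m + 1) * r * (ε / (r * (m + 1))) := by gcongr; linarith
      _ = ε := by field_simp

lemma exists_modulusOn_cube (m : ℕ) (hβ : 0 < β) (hr : 0 < r) {ε : ℝ} (hε : 0 < ε) :
    ∃ δ > 0, ∀ f ∈ HolderBall m β r, ModulusOn f (cube m) δ ε := by
  obtain ⟨δ, hδ, h⟩ := exists_modulusOn_cubeo m hβ hr hε
  exact ⟨δ, hδ, fun f hf => .of_interior (convex_cube m)
    ((interior_cube m).symm ▸ nonempty_cubeo m) hf.1 ((interior_cube m).symm ▸ h f hf)⟩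

end HolderBall

end Holder

/-- On the cube, `f` is a function of `D` of its arguments, repetitions allowed, which varies by
at most `ε` between points of `cube D` at distance at most `δ`. -/
def SparseModulus (D : ℕ) (δ ε : ℝ) {m : ℕ} (f : (Fin m → ℝ) → ℝ) : Prop :=
  ∃ (e : Fin D → Fin m) (g : (Fin D → ℝ) → ℝ),
    (∀ x ∈ cube m, f x = g fun j => x (e j)) ∧ ModulusOn g (cube D) δ ε

lemma SparseModulus.mono {D D' m : ℕ} {δ δ' ε : ℝ} {f : (Fin m → ℝ) → ℝ} (hD : 0 < D)
    (hDD' : D ≤ D') (hδ : δ' ≤ δ) (hf : SparseModulus D δ ε f) : SparseModulus D' δ' ε f := by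
  obtain ⟨e, g, hfg, hg⟩ := hf
  refine ⟨fun k => e (if hk : (k : ℕ) < D then ⟨k, hk⟩ else ⟨0, hD⟩),
    fun y => g fun j => y (Fin.castLE hDD' j), fun x hx => ?_, fun x hx z hz hxz => ?_⟩
  · simp [hfg x hx]
  · refine hg _ (fun j _ => hx _ (mem_univ _)) _ (fun j _ => hz _ (mem_univ _)) ?_
    exact (dist_pi_le_iff (dist_nonneg.trans (hxz.trans hδ))).2 fun j =>
      (dist_le_pi_dist x z _).trans (hxz.trans hδ)

lemma abs_sup'_sub_sup'_le {ι : Type*} {s : Finset ι} (hs : s.Nonempty) {x z : ι → ℝ} {δ : ℝ}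
    (h : ∀ j ∈ s, |x j - z j| ≤ δ) : |s.sup' hs x - s.sup' hs z| ≤ δ := by
  rw [abs_sub_le_iff]
  constructor <;> rw [sub_le_iff_le_add] <;> refine Finset.sup'_le _ _ fun j hj => ?_
  · linarith [(abs_le.1 (h j hj)).2, Finset.le_sup' z hj]
  · linarith [(abs_le.1 (h j hj)).1, Finset.le_sup' x hj]

lemma sparseModulus_sup' {m : ℕ} {s : Finset (Fin m)} (hs : s.Nonempty) (ε : ℝ) :
    SparseModulus s.card ε ε fun x => s.sup' hs fun i => x i := by
  have huniv : (Finset.univ : Finset (Fin s.card)).Nonempty :=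
    Finset.univ_nonempty_iff.2 ⟨⟨0, hs.card_pos⟩⟩
  refine ⟨s.orderEmbOfFin rfl, fun y => Finset.univ.sup' huniv y, fun x _ => ?_,
    fun x _ z _ hxz => abs_sup'_sub_sup'_le _ fun j _ => (dist_le_pi_dist x z j).trans hxz⟩
  exact (Finset.sup'_congr hs (Finset.map_orderEmbOfFin_univ s rfl).symm fun _ _ => rfl).trans
    (Finset.sup'_map x (huniv.map (f := (s.orderEmbOfFin rfl).toEmbedding)))

lemma exists_sparseModulus_of_mem_GH_union_GM (dmax : ℕ) {dstar : ℕ} (hdstar : 0 < dstar)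
    {β r : ℝ} (hβ : 0 < β) (hr : 0 < r) {ε : ℝ} (hε : 0 < ε) :
    ∃ δ > 0, ∀ m, ∀ f ∈ GH m dstar β r ∪ GM m dmax, SparseModulus (max dstar dmax) δ ε f := by
  obtain ⟨δ, hδ, h⟩ := HolderBall.exists_modulusOn_cube dstar hβ hr hε
  refine ⟨min δ ε, lt_min hδ hε, ?_⟩
  rintro m f (⟨e, g, -, hg, hfg⟩ | ⟨I, hI, hcard, hfI⟩)
  · exact SparseModulus.mono hdstar (le_max_left _ _) (min_le_left _ _) ⟨e, g, hfg, h g hg⟩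
  · obtain ⟨e, g, hg, hmod⟩ := sparseModulus_sup' hI ε
    exact SparseModulus.mono hI.card_pos (hcard.trans (le_max_right _ _)) (min_le_right _ _)
      ⟨e, g, fun x hx => (hfI x hx).trans (hg x hx), hmod⟩

/-! ### Approximation of compositions -/

section Bump

variable {D : ℕ} {g : (Fin D → ℝ) → ℝ} {Λ δ ε : ℝ} {p y : Fin D → ℝ}

/-- The cone of slope `Λ` with apex `(p, g p)` below which a `Λ`-Lipschitz function `g` lies;
finite maxima of such cones approximate `g` and are easily computed by networks. -/
def bump (Λ : ℝ) (g : (Fin D → ℝ) → ℝ) (p y : Fin D → ℝ) : ℝ := g p - Λ * ∑ j, |y j - p j|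

lemma bump_le (hΛ : 0 ≤ Λ) : bump Λ g p y ≤ g p :=
  sub_le_self _ (mul_nonneg hΛ (Finset.sum_nonneg fun _ _ => abs_nonneg _))

lemma bump_le_add (hg : MapsTo g (cube D) (Icc 0 1)) (hmod : ModulusOn g (cube D) δ ε)
    (hε : 0 ≤ ε) (hδ : 0 ≤ δ) (hΛ : 0 ≤ Λ) (hΛδ : 1 ≤ Λ * δ) (hp : p ∈ cube D)
    (hy : y ∈ cube D) : bump Λ g p y ≤ g y + ε := by
  by_cases hpy : dist p y ≤ δ
  · linarith [bump_le hΛ (g := g) (p := p) (y := y), (abs_le.1 (hmod p hp y hy hpy)).2]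
  · obtain ⟨j, hj⟩ : ∃ j, δ < |y j - p j| := by
      simpa only [dist_pi_le_iff hδ, Real.dist_eq, abs_sub_comm (p _), not_forall, not_le]
        using hpy
    have one_le : 1 ≤ Λ * ∑ j, |y j - p j| := hΛδ.trans (mul_le_mul_of_nonneg_left
      (hj.le.trans (Finset.single_le_sum (f := fun j => |y j - p j|)
        (fun _ _ => abs_nonneg _) (Finset.mem_univ j))) hΛ)
    linarith [show bump Λ g p y = g p - Λ * ∑ j, |y j - p j| from rfl, (hg hp).2, (hg hy).1]

lemma sub_le_bump (hmod : ModulusOn g (cube D) δ ε) (hΛ : 0 ≤ Λ) (hp : p ∈ cube D)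
    (hy : y ∈ cube D) (hyp : dist y p ≤ δ) (hyp' : Λ * (D * dist y p) ≤ ε) :
    g y - 2 * ε ≤ bump Λ g p y := by
  have sum_le : ∑ j, |y j - p j| ≤ D * dist y p := by
    simpa [Real.dist_eq] using
      Finset.sum_le_card_nsmul Finset.univ _ _ fun j _ => dist_le_pi_dist y p j
  linarith [show bump Λ g p y = g p - Λ * ∑ j, |y j - p j| from rfl,
    (abs_le.1 (hmod y hy p hp hyp)).2, mul_le_mul_of_nonneg_left sum_le hΛ]

lemma max_zero_sup'_bump_mem_Icc (hg : MapsTo g (cube D) (Icc 0 1)) (hΛ : 0 ≤ Λ)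
    {s : Finset (Fin D → ℝ)} (hs : s.Nonempty) (hscube : ↑s ⊆ cube D) :
    max 0 (s.sup' hs fun p => bump Λ g p y) ∈ Icc (0 : ℝ) 1 :=
  ⟨le_max_left _ _, max_le zero_le_one (Finset.sup'_le _ _ fun _ hp =>
    (bump_le hΛ).trans (hg (hscube hp)).2)⟩

lemma abs_max_zero_sup'_bump_sub_le (hg : MapsTo g (cube D) (Icc 0 1))
    (hmod : ModulusOn g (cube D) δ ε) (hε : 0 ≤ ε) (hδ : 0 ≤ δ) (hΛ : 0 ≤ Λ) (hΛδ : 1 ≤ Λ * δ)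
    {s : Finset (Fin D → ℝ)} (hs : s.Nonempty) (hscube : ↑s ⊆ cube D) (hy : y ∈ cube D)
    (hyp : ∃ p ∈ s, dist y p ≤ δ ∧ Λ * (D * dist y p) ≤ ε) :
    |max 0 (s.sup' hs fun p => bump Λ g p y) - g y| ≤ 2 * ε := by
  have le_add : max 0 (s.sup' hs fun p => bump Λ g p y) ≤ g y + ε :=
    max_le (add_nonneg (hg hy).1 hε) (Finset.sup'_le _ _ fun p hp =>
      bump_le_add hg hmod hε hδ hΛ hΛδ (hscube hp) hy)
  have sub_le : g y - 2 * ε ≤ max 0 (s.sup' hs fun p => bump Λ g p y) := by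
    obtain ⟨p, hp, hdist, hΛdist⟩ := hyp
    exact (sub_le_bump hmod hΛ (hscube hp) hy hdist hΛdist).trans
      (le_max_of_le_right (Finset.le_sup' (fun p => bump Λ g p y) hp))
  exact abs_le.2 ⟨by linarith, by linarith⟩

end Bump

lemma exists_finset_net {X : Type*} [PseudoMetricSpace X] {s : Set X} (hs : IsCompact s)
    (hne : s.Nonempty) {ρ : ℝ} (hρ : 0 < ρ) :
    ∃ t : Finset X, t.Nonempty ∧ ↑t ⊆ s ∧ ∀ y ∈ s, ∃ p ∈ t, dist y p ≤ ρ := by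
  obtain ⟨t, hts, ht, hcover⟩ := hs.finite_cover_balls hρ
  lift t to Finset X using ht
  have exists_close (y) (hy : y ∈ s) : ∃ p ∈ t, dist y p ≤ ρ := by
    obtain ⟨p, hp, hyp⟩ := mem_iUnion₂.1 (hcover hy)
    exact ⟨p, hp, (Metric.mem_ball.1 hyp).le⟩
  obtain ⟨y, hy⟩ := hne
  obtain ⟨p, hp, -⟩ := exists_close y hy
  exact ⟨t, ⟨p, hp⟩, hts, exists_close⟩

namespace UniformNet

variable {I : Type} {d : I → ℕ} {D : ℕ} {g : I → (Fin D → ℝ) → ℝ}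
  {a : ∀ i, (Fin (d i) → ℝ) → Fin D → ℝ}

lemma bump_comp (hd : ∀ i, 0 < d i) (Λ : ℕ) (hg : ∀ i, MapsTo (g i) (cube D) (Icc 0 1))
    (ha : ∀ j, UniformNet fun i x => a i x j) {p : Fin D → ℝ} (hp : p ∈ cube D) :
    UniformNet fun i x => bump Λ (g i) p (a i x) := by
  have abs_le_one {t : ℝ} (ht : t ∈ Icc (0 : ℝ) 1) : |t| ≤ 1 := (abs_of_nonneg ht.1).trans_le ht.2
  exact (const hd fun i => abs_le_one (hg i hp)).sub (natCast_mul hd (UniformNet.sum hd _ fun j =>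
    ((ha j).sub (const hd fun _ => abs_le_one (hp j (mem_univ j)))).abs) Λ)

lemma exists_comp_approx (hd : ∀ i, 0 < d i) {ε δ : ℝ} (hε : 0 < ε) (hδ : 0 < δ)
    (hg : ∀ i, MapsTo (g i) (cube D) (Icc 0 1)) (hmod : ∀ i, ModulusOn (g i) (cube D) δ ε)
    (ha : ∀ j, UniformNet fun i x => a i x j) (hacube : ∀ i, MapsTo (a i) (cube (d i)) (cube D)) :
    ∃ u : ∀ i, (Fin (d i) → ℝ) → ℝ, UniformNet u ∧ ∀ i, ∀ x ∈ cube (d i),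
      u i x ∈ Icc (0 : ℝ) 1 ∧ |u i x - g i (a i x)| ≤ 2 * ε := by
  set Λ : ℕ := ⌈1 / δ⌉₊
  have hΛ : (0 : ℝ) ≤ Λ := Nat.cast_nonneg _
  have hΛδ : 1 ≤ Λ * δ := (div_le_iff₀ hδ).1 (Nat.le_ceil _)
  obtain ⟨s, hs, hscube, hnet⟩ :=
    exists_finset_net (isCompact_univ_pi fun _ : Fin D => isCompact_Icc (a := (0 : ℝ)) (b := 1))
      (univ_pi_nonempty_iff.2 fun _ => nonempty_Icc.2 zero_le_one)
      (show 0 < min δ (ε / (Λ * D + 1)) by positivity)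
  refine ⟨fun i x => max 0 (s.sup' hs fun p => bump Λ (g i) p (a i x)),
    (finset_sup' hs fun p hp => bump_comp hd Λ hg ha (hscube hp)).relu, fun i x hx =>
    ⟨max_zero_sup'_bump_mem_Icc (hg i) hΛ hs hscube,
      abs_max_zero_sup'_bump_sub_le (hg i) (hmod i) hε.le hδ.le hΛ hΛδ hs hscube
        (hacube i hx) ?_⟩⟩
  obtain ⟨p, hp, hdist⟩ := hnet _ (hacube i hx)
  refine ⟨p, hp, hdist.trans (min_le_left _ _), ?_⟩
  calc (Λ : ℝ) * (D * dist (a i x) p) ≤ (Λ * D + 1) * (ε / (Λ * D + 1)) := by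
        rw [← mul_assoc]
        gcongr
        exacts [by linarith, hdist.trans (min_le_right _ _)]
    _ = ε := by field_simp

end UniformNet

/-- Composed with inner functions that are `δ`-close to a uniform family of networks, the members
of the class `C` are `ε`-close to a uniform family of networks. Only the values of the members in
`[0,1]` matter, and values outside are projected. -/
def UniformlyApproximable (C : ∀ m, Set ((Fin m → ℝ) → ℝ)) : Prop :=
  ∀ ε > 0, ∃ δ > 0, ∀ {I : Type} {d m : I → ℕ} {f : ∀ i, (Fin (m i) → ℝ) → ℝ}
    {a b : ∀ i, (Fin (d i) → ℝ) → Fin (m i) → ℝ}, (∀ i, 0 < d i) → (∀ i, f i ∈ C (m i)) →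
    UniformNet (fun (p : Σ i, Fin (m i)) x => b p.1 x p.2) →
    (∀ i, MapsTo (a i) (cube (d i)) (cube (m i))) →
    (∀ i, MapsTo (b i) (cube (d i)) (cube (m i))) →
    (∀ i, ∀ x ∈ cube (d i), dist (b i x) (a i x) ≤ δ) →
    ∃ u : ∀ i, (Fin (d i) → ℝ) → ℝ, UniformNet u ∧ ∀ i, ∀ x ∈ cube (d i),
      u i x ∈ Icc (0 : ℝ) 1 ∧ |u i x - projIcc 0 1 zero_le_one (f i (a i x))| ≤ ε

lemma trunc_one_mul_sub_half_eq_sgn {M t u η : ℝ} (ht : 0 < t) (hM : 1 ≤ M * (t / 4))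
    (hu : |u - η| ≤ t / 4) (hη : t ≤ |2 * η - 1|) :
    trunc 1 (M * (u - 1 / 2)) = sgn (2 * η - 1) := by
  have hM0 : 0 ≤ M := (pos_of_mul_pos_left (one_pos.trans_le hM) (by positivity)).le
  obtain ⟨hu_left, hu_right⟩ := abs_le.1 hu
  rcases le_abs.1 hη with hη | hη
  · have one_le : 1 ≤ M * (u - 1 / 2) :=
      hM.trans (mul_le_mul_of_nonneg_left (by linarith) hM0)
    rw [sgn, if_pos (by linarith), trunc, min_eq_left (le_max_of_le_right one_le)]
  · have le_neg_one : M * (u - 1 / 2) ≤ -1 := by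
      linarith [mul_le_mul_of_nonneg_left (by linarith : t / 4 ≤ 1 / 2 - u) hM0]
    rw [sgn, if_neg (by linarith), trunc, max_eq_left le_neg_one, min_eq_right (by norm_num)]

namespace UniformlyApproximable

variable {C C' : ∀ m, Set ((Fin m → ℝ) → ℝ)}

lemma mono (hC : UniformlyApproximable C) (h : ∀ m, C' m ⊆ C m) : UniformlyApproximable C' :=
  fun ε hε =>
    let ⟨δ, hδ, happrox⟩ := hC ε hε
    ⟨δ, hδ, fun hd hf => happrox hd fun i => h _ (hf i)⟩

lemma of_sparseModulus
    (h : ∀ ε > 0, ∃ D, ∃ δ > 0, ∀ m, ∀ f ∈ C m, SparseModulus D δ ε f) :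
    UniformlyApproximable C := by
  intro ε hε
  obtain ⟨D, δ, hδ, hC⟩ := h (ε / 3) (by positivity)
  refine ⟨δ, hδ, fun {I d m f a b} hd hf hb hacube hbcube hab => ?_⟩
  choose e g hfg hg using fun i => hC (m i) (f i) (hf i)
  have hmod (i) : ModulusOn (fun y => (projIcc 0 1 zero_le_one (g i y) : ℝ)) (cube D) δ (ε / 3) :=
    fun y hy z hz hyz => (abs_projIcc_sub_projIcc _).trans (hg i y hy z hz hyz)
  have hacube' (i) (x) (hx : x ∈ cube (d i)) : (fun j => a i x (e i j)) ∈ cube D :=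
    fun j _ => hacube i hx _ (mem_univ _)
  have hbcube' (i) (x) (hx : x ∈ cube (d i)) : (fun j => b i x (e i j)) ∈ cube D :=
    fun j _ => hbcube i hx _ (mem_univ _)
  obtain ⟨u, hu, hu'⟩ := UniformNet.exists_comp_approx hd (by positivity) hδ
    (fun i _ _ => Subtype.prop _) hmod (a := fun i x j => b i x (e i j))
    (fun j => hb.comp fun i => ⟨i, e i j⟩) hbcube'
  refine ⟨u, hu, fun i x hx => ⟨(hu' i x hx).1, ?_⟩⟩
  have inner_le := hmod i _ (hbcube' i x hx) _ (hacube' i x hx)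
    ((dist_pi_le_iff hδ.le).2 fun j => (dist_le_pi_dist _ _ (e i j)).trans (hab i x hx))
  rw [hfg i _ (hacube i hx)]
  linarith [abs_sub_le (u i x) _ _ |>.trans (add_le_add (hu' i x hx).2 inner_le)]

lemma comp (hC : UniformlyApproximable C) (hC' : UniformlyApproximable C') :
    UniformlyApproximable fun m => {f | ∃ (K : ℕ) (H : (Fin m → ℝ) → Fin K → ℝ),
      ∃ g ∈ C' K, (∀ j, (fun x => H x j) ∈ C m) ∧ MapsTo H (cube m) (cube K) ∧
        ∀ x ∈ cube m, f x = g (H x)} := by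
  intro ε hε
  obtain ⟨δ', hδ', hC'⟩ := hC' ε hε
  obtain ⟨δ, hδ, hC⟩ := hC δ' hδ'
  refine ⟨δ, hδ, fun {I d m f a b} hd hf hb hacube hbcube hab => ?_⟩
  choose K H g hg hH hHcube hfg using hf
  obtain ⟨u, hu, hu'⟩ := hC (I := Σ i, Fin (K i)) (fun p => hd p.1) (fun p => hH p.1 p.2)
    (hb.comp fun p : Σ p : Σ i, Fin (K i), Fin (m p.1) => ⟨p.1.1, p.2⟩)
    (fun p => hacube p.1) (fun p => hbcube p.1) (fun p => hab p.1)
  have hHacube (i) : MapsTo (H i ∘ a i) (cube (d i)) (cube (K i)) := (hHcube i).comp (hacube i)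
  obtain ⟨w, hw, hw'⟩ := hC' (a := fun i => H i ∘ a i) (b := fun i x j => u ⟨i, j⟩ x) hd hg hu
    hHacube (fun i x hx j _ => (hu' ⟨i, j⟩ x hx).1) fun i x hx =>
      (dist_pi_le_iff hδ'.le).2 fun j => by
        have hu_sub : |u ⟨i, j⟩ x - projIcc 0 1 zero_le_one (H i (a i x) j)| ≤ δ' :=
          (hu' ⟨i, j⟩ x hx).2
        have hmem : H i (a i x) j ∈ Icc 0 1 := hHacube i hx j (mem_univ j)
        rwa [projIcc_of_mem _ hmem] at hu_sub
  refine ⟨w, hw, fun i x hx => ?_⟩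
  rw [hfg i _ (hacube i hx)]
  exact hw' i x hx

lemma exists_uniformNet (hC : UniformlyApproximable C) {ε : ℝ} (hε : 0 < ε) {I : Type}
    {d : I → ℕ} (hd : ∀ i, 0 < d i) {f : ∀ i, (Fin (d i) → ℝ) → ℝ} (hf : ∀ i, f i ∈ C (d i)) :
    ∃ u : ∀ i, (Fin (d i) → ℝ) → ℝ, UniformNet u ∧ ∀ i, ∀ x ∈ cube (d i),
      |u i x - projIcc 0 1 zero_le_one (f i x)| ≤ ε := by
  obtain ⟨δ, hδ, h⟩ := hC ε hε
  obtain ⟨u, hu, hu'⟩ := h (a := fun _ x => x) (b := fun _ x => x) hd hf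
    (UniformNet.coord (d := fun p : Σ i, Fin (d i) => d p.1) fun p => p.2) (fun _ => mapsTo_id _)
    (fun _ => mapsTo_id _) fun _ x _ => (dist_self x).trans_le hδ.le
  exact ⟨u, hu, fun i x hx => (hu' i x hx).2⟩

lemma exists_sgn_mem_FNN (hC : UniformlyApproximable C) {t : ℝ} (ht : 0 < t) :
    ∃ c : ℕ, 0 < c ∧ ∀ {d : ℕ}, 0 < d → ∀ f ∈ C d, ∀ {G N B : ℝ} {S : ℝ≥0∞},
      c ≤ G → c ≤ N → d ≤ N → 1 ≤ B → c ≤ S → ∃ f₀ ∈ FNN d G N S B ∞,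
        ∀ x ∈ cube d, f x ∈ Icc (0 : ℝ) 1 → t ≤ |2 * f x - 1| → f₀ x = sgn (2 * f x - 1) := by
  let I : Type := {p : Σ d : ℕ, (Fin d → ℝ) → ℝ // 0 < p.1 ∧ p.2 ∈ C p.1}
  have hd (i : I) : 0 < i.1.1 := i.2.1
  obtain ⟨u, hu, hu'⟩ := hC.exists_uniformNet (by positivity : 0 < t / 4) hd fun i => i.2.2
  have hhalf : UniformNet (d := fun i : I => i.1.1) fun _ _ => 1 / 2 :=
    .const hd fun _ => by norm_num [abs_le]
  obtain ⟨c, hc, hnet⟩ := (((hu.sub hhalf).natCast_mul hd ⌈4 / t⌉₊).trunc_one hd).exists_size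
  refine ⟨c, hc, fun {d} hd f hf G N B S hG hN hdN hB hS => ?_⟩
  obtain ⟨f₀, hf₀, heq⟩ := hnet ⟨⟨d, f⟩, hd, hf⟩ hG hN hdN hB hS
  refine ⟨f₀, hf₀, fun x hx hf01 hft => (heq x hx).trans ?_⟩
  have hu_sub := hu' ⟨⟨d, f⟩, hd, hf⟩ x hx
  rw [projIcc_of_mem _ hf01] at hu_sub
  refine trunc_one_mul_sub_half_eq_sgn ht ?_ hu_sub hft
  linarith [(div_le_iff₀ ht).1 (Nat.le_ceil (4 / t))]

end UniformlyApproximable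

lemma uniformlyApproximable_GH_union_GM (dmax : ℕ) {dstar : ℕ} (hdstar : 0 < dstar) {β r : ℝ}
    (hβ : 0 < β) (hr : 0 < r) :
    UniformlyApproximable fun m => GH m dstar β r ∪ GM m dmax :=
  .of_sparseModulus fun _ hε =>
    ⟨_, exists_sparseModulus_of_mem_GH_union_GM dmax hdstar hβ hr hε⟩

lemma uniformlyApproximable_GCHOM (dmax : ℕ) {dstar : ℕ} (hdstar : 0 < dstar) {β r : ℝ}
    (hβ : 0 < β) (hr : 0 < r) (q : ℕ) :
    UniformlyApproximable fun m => {f | ∃ K, f ∈ GCHOM K dmax dstar β r q m} := by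
  have hblock := uniformlyApproximable_GH_union_GM dmax hdstar hβ hr
  induction q with
  | zero =>
    refine hblock.mono ?_
    rintro m f ⟨K, h, ⟨e, g, he, hg, hh⟩ | ⟨s, hs, hcard, hh⟩, hfh⟩
    · exact .inl ⟨e, g, he, hg, fun x hx => (hfh x hx).trans (hh x hx)⟩
    · exact .inr ⟨s, hs, hcard, fun x hx => (hfh x hx).trans (hh x hx)⟩
  | succ q ih =>
    refine (hblock.comp ih).mono ?_
    rintro m f ⟨K, H, g, hH, hHcube, hg, hfg⟩
    exact ⟨K, H, g, ⟨K, hg⟩, hH, hHcube, hfg⟩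

/-! ### The rate -/

lemma FNN.natCast_le_width {d : ℕ} {G N B : ℝ} {S Fb : ℝ≥0∞} {f : (Fin d → ℝ) → ℝ}
    (hf : f ∈ FNN d G N S B Fb) : (d : ℝ) ≤ N := by
  obtain ⟨net, -, -, hwidth, -⟩ := hf
  simpa only [net.h0] using hwidth 0 (Nat.zero_le _)

lemma ae_le_abs_of_mem_Tsybakov_top {d : ℕ} {D : DataDist d} {α t : ℝ} {τ : ℝ≥0∞}
    (hD : D ∈ Tsybakov d ∞ α τ) (ht : 0 < t) (ht1 : t < 1) (htτ : ENNReal.ofReal t ≤ τ) :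
    ∀ᵐ x ∂D.Q, t ≤ |2 * D.η x - 1| := by
  have null : D.Q ({x | |2 * D.η x - 1| ≤ t} ∩ cube d) = 0 := by
    simpa only [rpowE, if_true, if_pos (ENNReal.ofReal_lt_one.2 ht1), mul_zero, nonpos_iff_eq_zero]
      using hD t ht htτ
  filter_upwards [measure_eq_zero_iff_ae_notMem.1 null, D.ae_mem_cube] with x hx hxcube
  by_contra! hlt
  exact hx ⟨hlt.le, hxcube⟩

lemma exists_ae_le_abs_of_mem_Tsybakov_top {τ : ℝ≥0∞} (hτ : 0 < τ) :
    ∃ t > 0, ∀ {d : ℕ} {α : ℝ}, ∀ D ∈ Tsybakov d ∞ α τ, ∀ᵐ x ∂D.Q, t ≤ |2 * D.η x - 1| := by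
  have hne : min τ (1 / 2) ≠ ∞ := (min_lt_of_right_lt (by simp)).ne
  have hlt : (min τ (1 / 2)).toReal < 1 :=
    (ENNReal.toReal_mono (by simp) (min_le_right τ (1 / 2))).trans_lt (by norm_num)
  have hpos : 0 < (min τ (1 / 2)).toReal := ENNReal.toReal_pos (lt_min hτ (by simp)).ne' hne
  exact ⟨_, hpos, fun D hD => ae_le_abs_of_mem_Tsybakov_top hD hpos hlt
    ((ENNReal.ofReal_toReal hne).trans_le (min_le_left _ _))⟩

lemma exists_mem_FNN_ae_eq_bayes (dmax : ℕ) {dstar : ℕ} (hdstar : 0 < dstar) {β r : ℝ}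
    (hβ : 0 < β) (hr : 0 < r) (q : ℕ) {t : ℝ} (ht : 0 < t) :
    ∃ c : ℕ, 0 < c ∧ ∀ {d : ℕ}, 0 < d → ∀ {K : ℕ}, ∀ D ∈ HCHOM d q K dstar dmax β r,
      (∀ᵐ x ∂D.Q, t ≤ |2 * D.η x - 1|) → ∀ {G N B : ℝ} {S : ℝ≥0∞},
      c ≤ G → c ≤ N → d ≤ N → 1 ≤ B → c ≤ S →
      ∃ f₀ ∈ FNN d G N S B ∞, ∀ᵐ x ∂D.Q, f₀ x = D.bayes x := by
  obtain ⟨c, hc, hsgn⟩ :=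
    (uniformlyApproximable_GCHOM dmax hdstar hβ hr q).exists_sgn_mem_FNN ht
  refine ⟨c, hc, fun {d} hd {K} D hD hmargin G N B S hG hN hdN hB hS => ?_⟩
  obtain ⟨f, hf, hηf⟩ := hD
  obtain ⟨f₀, hf₀, heq⟩ := hsgn hd f ⟨K, hf⟩ hG hN hdN hB hS
  refine ⟨f₀, hf₀, ?_⟩
  filter_upwards [hmargin, hηf, D.ae_mem_cube] with x hx hxf hxcube
  rw [DataDist.bayes, hxf]
  exact heq x hxcube (hxf ▸ D.η_mem x) (hxf ▸ hx)

lemma exists_expectedExcess01_le_of_bayes_mem_FNN {t b ν : ℝ} (ht : 0 < t) (hν : 0 ≤ ν) :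
    ∃ c : ℝ, 0 < c ∧ ∀ {d n : ℕ} {G N B : ℝ} {S Fb : ℝ≥0∞},
      2 ≤ n → G ≤ b → N ≤ b → 1 ≤ B → B ≤ b * (n : ℝ) ^ ν →
      ∀ {A : Estimator d n}, A.Meas → (∀ ω, IsERM hinge (FNN d G N S B Fb) ω (A ω)) →
      ∀ D : DataDist d, (∀ᵐ x ∂D.Q, t ≤ |2 * D.η x - 1|) →
      (∃ f₀ ∈ FNN d G N S B Fb, ∀ᵐ x ∂D.Q, f₀ x = D.bayes x) →
      expectedExcess01 D.P A ≤ c * Real.log n / n := by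
  have log_two_pos : 0 < Real.log 2 := Real.log_pos one_lt_two
  obtain ⟨C, hC, hcover⟩ := FNN.exists_finset_cover_log_card_le (le_max_left 1 b) hν
  refine ⟨3 / Real.log 2 + 8 * C / t, by positivity, ?_⟩
  rintro d n G N B S Fb hn hG hN hB hBn A hA hERM D hmargin ⟨f₀, hf₀, hbayes⟩
  have n_pos : (0 : ℝ) < n := by exact_mod_cast zero_lt_two.trans_le hn
  have hBn' : B ≤ max 1 b * (n : ℝ) ^ ν := hBn.trans (by gcongr; exact le_max_right _ _)
  obtain ⟨T, hTmeas, hTcard, hT⟩ := hcover d n G N B S Fb hn (hG.trans (le_max_right _ _))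
    (hN.trans (le_max_right _ _)) hB hBn'
  have three_le : 3 ≤ 3 / Real.log 2 * Real.log n := by
    rw [div_mul_eq_mul_div, le_div_iff₀ log_two_pos]
    gcongr
    exact_mod_cast hn
  calc expectedExcess01 D.P A ≤ 3 * (1 / n) + 8 / (n * t) * Real.log T.card :=
        DataDist.expectedExcess01_le ht hmargin hbayes (zero_lt_two.trans_le hn) hA
          (fun ω => le_of_mul_le_mul_left ((hERM ω).2 f₀ hf₀) (inv_pos.2 n_pos)) hTmeas
          (by positivity) fun ω => hT _ (hERM ω).1
    _ ≤ 3 / Real.log 2 * Real.log n * (1 / n) + 8 / (n * t) * (C * Real.log n) := by gcongr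
    _ = (3 / Real.log 2 + 8 * C / t) * Real.log n / n := by field_simp

theorem statement_3_general (dmax : ℕ) {dstar : ℕ} (hdstar : 0 < dstar) (q : ℕ) {β r : ℝ}
    (hβ : 0 < β) (hr : 0 < r) {τ : ℝ≥0∞} (hτ : 0 < τ) :
    ∃ c4 : ℝ, 0 < c4 ∧ ∀ {ν : ℝ}, 0 ≤ ν → ∀ b : ℝ, ∃ c5 : ℝ, 0 < c5 ∧
      ∀ {n d K : ℕ} {α G N B : ℝ} {S : ℝ≥0∞}, 0 < d → 2 ≤ n →
      c4 ≤ G → G ≤ b → c4 ≤ N → N ≤ b → 1 ≤ B → B ≤ b * (n : ℝ) ^ ν → ENNReal.ofReal c4 ≤ S →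
      ∀ A : Estimator d n, A.Meas → (∀ ω, IsERM hinge (FNN d G N S B ∞) ω (A ω)) →
      ∀ D ∈ HCHOM d q K dstar dmax β r ∩ Tsybakov d ∞ α τ,
        expectedExcess01 D.P A ≤ c5 * Real.log n / n := by
  obtain ⟨t, ht, hmargin⟩ := exists_ae_le_abs_of_mem_Tsybakov_top hτ
  obtain ⟨c4, hc4, hbayes⟩ := exists_mem_FNN_ae_eq_bayes dmax hdstar hβ hr q ht
  refine ⟨c4, Nat.cast_pos.2 hc4, fun {ν} hν b => ?_⟩
  obtain ⟨c5, hc5, hrate⟩ := exists_expectedExcess01_le_of_bayes_mem_FNN (b := b) ht hν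
  refine ⟨c5, hc5, fun hd hn hG hGb hN hNb hB hBn hS A hA hERM D hD => ?_⟩
  rw [ENNReal.ofReal_natCast] at hS
  exact hrate hn hGb hNb hB hBn hA hERM D (hmargin D hD.2)
    (hbayes hd D hD.1 (hmargin D hD.2) hG hN (FNN.natCast_le_width (hERM 0).1) hB hS)

/-- Theorem 3.2 : fast rate for hinge-loss ReLU DNN classifiers, `s = ∞`. -/
theorem statement_3
    (dmax dstar q : ℕ) (hdmax : 0 < dmax) (hdstar : 0 < dstar)
    (β r : ℝ) (hβ : 0 < β) (hr : 0 < r) (τ : ℝ≥0∞) (hτ : 0 < τ) :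
    ∃ c4 : ℝ, 0 < c4 ∧
      ∀ (d : ℕ), 0 < d → ∀ (α : ℝ), 0 < α → ∀ (ν : ℝ), 0 ≤ ν → ∀ (b : ℝ), 0 < b →
      ∃ c5 : ℝ, 0 < c5 ∧
        ∀ (n K : ℕ) (G N B : ℝ) (S : ℝ≥0∞),
          0 < K → 0 < G → 1 ≤ N → 0 < S → 0 < B →
          dstar ≤ d → dstar * q ≤ K * q → ¬(α < 1 ∧ 1 ≤ τ) →
          2 ≤ n →
          c4 ≤ G → G ≤ b → (K : ℝ) * c4 ≤ N → N ≤ b →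
          1 ≤ B → B ≤ b * (n : ℝ) ^ ν →
          ENNReal.ofReal ((K : ℝ) * c4) ≤ S →
          ∀ A : Estimator d n, A.Meas → (∀ ω, IsERM hinge (FNN d G N S B ∞) ω (A ω)) →
          (⨆ D : ↥(HCHOM d q K dstar dmax β r ∩ Tsybakov d ∞ α τ),
              expectedExcess01 D.1.P A) ≤ c5 * Real.log n / n := by
  obtain ⟨c4, hc4, hrate⟩ := statement_3_general dmax hdstar q hβ hr hτ
  refine ⟨c4, hc4, fun d hd α _ ν hν b _ => ?_⟩
  obtain ⟨c5, hc5, hrate⟩ := hrate hν b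
  refine ⟨c5, hc5, fun n K G N B S hK _ _ _ _ _ _ _ hn hG hGb hN hNb hB hBn hS A hA hERM => ?_⟩
  have c4_le : c4 ≤ K * c4 := le_mul_of_one_le_left hc4.le (Nat.one_le_cast.2 hK)
  exact Real.iSup_le (fun D => hrate hd hn hG hGb (c4_le.trans hN) hNb hB hBn
    ((ENNReal.ofReal_le_ofReal c4_le).trans hS) A hA hERM D.1 D.2)
    (div_nonneg (mul_nonneg hc5.le (Real.log_natCast_nonneg n)) n.cast_nonneg)

end ZZS
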